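/- arXiv:2205.09243 — 4 statements merged into one kernel-verified Lean document; each statement's English description precedes it below -/
import Mathlib

section
/- For every integer d ≥ 1 there exists a constant K = K(d) > 0 with the following property. Let ρ ≥ 0, let Z = (z_1, …, z_n) be a non-overlapping configuration of n entities of radius ρ in ℝ^d with pairwise distinct centers, let 1 ≤ x ≤ n−1 be an integer, and let B be a closed ball in ℝ^d of radius r_B. Then the number of indices i such that r_i(x) ≥ r_B and B_i(x) ∩ B ≠ ∅ is at most K·x. -/
open Metric Set

/-- The `x`-separation of entity `i` in the configuration `z` of entities of radius `ρ`:
the `x`-th smallest value of `dist (z i) (z j) - 2ρ` over `j ≠ i`. -/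
noncomputable def xSep {d n : ℕ} (ρ : ℝ) (z : Fin n → EuclideanSpace ℝ (Fin d))
    (x : ℕ) (i : Fin n) : ℝ :=
  sInf {r : ℝ | x ≤ {j : Fin n | j ≠ i ∧ dist (z i) (z j) - 2 * ρ ≤ r}.ncard}

/-! Rescale each `p = z i - c` to `u = p / a` in the unit ball, where `a = max ‖p‖ (2 * rB)`.
If `B_i(x)` meets `B` and `rB ≤ r_i(x)`, then `a ≤ r_i(x) + rB`. Let `q = z j - c ≠ p` have the
rescaling `v = q / b`, with `b ≤ a` and `‖u - v‖ < 1 / 2`. Then `b > 0`, since `b = 0` would force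
`v = 0` and `‖u‖ = 1`, and so
`‖p - q‖ ≤ (a - b) + b * ‖u - v‖ < a - b / 2 ≤ a - rB ≤ r_i(x)`.
Fewer than `x` indices `j ≠ i` satisfy `‖z i - z j‖ < r_i(x)`, so each part of a partition of the
unit ball into pieces whose points are less than `1 / 2` apart receives at most `x` of the indices
to be counted: compare all of them with the one of largest `a`. -/

theorem exists_coloring_dist_lt_of_totallyBounded {X : Type*} [PseudoMetricSpace X] {s : Set X}
    (hs : TotallyBounded s) {ε : ℝ} (hε : 0 < ε) :
    ∃ (K : ℕ) (color : s → Fin K), ∀ u v, color u = color v → dist u v < ε := by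
  obtain ⟨t, ht, hst⟩ := Metric.totallyBounded_iff.mp hs (ε / 2) (half_pos hε)
  have := ht.fintype
  have hcover (u : s) : ∃ y : t, dist (u : X) y < ε / 2 := by
    simpa using hst u.2
  choose center hcenter using hcover
  refine ⟨Fintype.card t, Fintype.equivFin t ∘ center, fun u v huv ↦ ?_⟩
  have hv := hcenter v
  rw [← (Fintype.equivFin t).injective huv] at hv
  calc dist (u : X) v ≤ dist (u : X) (center u) + dist (v : X) (center u) :=
        dist_triangle_right _ _ _
    _ < ε := by linarith [hcenter u]

section TruncatedDirection

variable {E : Type*} [NormedAddCommGroup E] [NormedSpace ℝ E]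

/-- The direction of `p` truncated at scale `R`: the vector `p` rescaled into the closed unit ball
by `max ‖p‖ R`. It is the unit vector along `p` when `R ≤ ‖p‖` and `p ≠ 0`, it is `R⁻¹ • p` nearer
to the origin, and it is `0` at `p = 0` for every `R`. -/
noncomputable def truncatedDirection (R : ℝ) (p : E) : E := (max ‖p‖ R)⁻¹ • p

theorem max_norm_smul_truncatedDirection (R : ℝ) (p : E) :
    max ‖p‖ R • truncatedDirection R p = p := by
  rcases eq_or_ne p 0 with rfl | hp
  · simp [truncatedDirection]
  · exact smul_inv_smul₀ (lt_max_of_lt_left (norm_pos_iff.mpr hp)).ne' p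

theorem norm_truncatedDirection (R : ℝ) (p : E) :
    ‖truncatedDirection R p‖ = ‖p‖ / max ‖p‖ R := by
  rw [truncatedDirection, norm_smul, norm_inv,
    Real.norm_of_nonneg (le_max_of_le_left (norm_nonneg p)), inv_mul_eq_div]

theorem norm_truncatedDirection_le_one (R : ℝ) (p : E) : ‖truncatedDirection R p‖ ≤ 1 := by
  rw [norm_truncatedDirection]
  exact div_le_one_of_le₀ (le_max_left _ _) (le_max_of_le_left (norm_nonneg p))

theorem dist_le_of_max_norm_le {R : ℝ} {p q : E} (hqp : max ‖q‖ R ≤ max ‖p‖ R) :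
    dist p q ≤ max ‖p‖ R - max ‖q‖ R
      + max ‖q‖ R * dist (truncatedDirection R p) (truncatedDirection R q) := by
  set a := max ‖p‖ R
  set b := max ‖q‖ R
  set u := truncatedDirection R p
  set v := truncatedDirection R q
  have hdecomp : p - q = (a - b) • u + b • (u - v) := by
    rw [sub_smul, smul_sub, max_norm_smul_truncatedDirection R p,
      max_norm_smul_truncatedDirection R q]
    abel
  have hb : 0 ≤ b := le_max_of_le_left (norm_nonneg q)
  calc dist p q = ‖(a - b) • u + b • (u - v)‖ := by rw [dist_eq_norm, hdecomp]
    _ ≤ (a - b) * ‖u‖ + b * ‖u - v‖ := by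
        refine (norm_add_le _ _).trans_eq ?_
        rw [norm_smul, norm_smul, Real.norm_of_nonneg (sub_nonneg.mpr hqp),
          Real.norm_of_nonneg hb]
    _ ≤ a - b + b * dist u v := by
        rw [dist_eq_norm]
        gcongr
        exact mul_le_of_le_one_right (sub_nonneg.mpr hqp) (norm_truncatedDirection_le_one R p)

theorem max_norm_pos_of_dist_truncatedDirection_lt_one {R : ℝ} {p q : E} (hpq : p ≠ q)
    (hdir : dist (truncatedDirection R p) (truncatedDirection R q) < 1) :
    0 < max ‖q‖ R := by
  by_contra! hmax
  obtain ⟨hq, hR⟩ := max_le_iff.mp hmax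
  obtain rfl : q = 0 := norm_le_zero_iff.mp hq
  have hunit : ‖truncatedDirection R p‖ = 1 := by
    rw [norm_truncatedDirection, max_eq_left (hR.trans (norm_nonneg p)),
      div_self (norm_ne_zero_iff.mpr hpq)]
  have hzero : truncatedDirection R (0 : E) = 0 := smul_zero _
  rw [hzero, dist_zero_right, hunit] at hdir
  exact hdir.false

theorem dist_lt_of_dist_truncatedDirection_lt_half {R : ℝ} {p q : E} (hpq : p ≠ q)
    (hqp : max ‖q‖ R ≤ max ‖p‖ R)
    (hdir : dist (truncatedDirection R p) (truncatedDirection R q) < 1 / 2) :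
    dist p q < max ‖p‖ R - R / 2 := by
  have hpos : 0 < max ‖q‖ R :=
    max_norm_pos_of_dist_truncatedDirection_lt_one hpq (hdir.trans (by norm_num))
  calc dist p q ≤ _ := dist_le_of_max_norm_le hqp
    _ < max ‖p‖ R - max ‖q‖ R + max ‖q‖ R * (1 / 2) := by gcongr
    _ ≤ max ‖p‖ R - R / 2 := by linarith [le_max_right ‖q‖ R]

end TruncatedDirection

section Separation

variable {X ι : Type*} [PseudoMetricSpace X]

/-- The `x`-separation of the entity `i` among entities of radius `ρ` centered at the points `z` of
an arbitrary metric space; `xSep` is the case of `n` entities in Euclidean space. As there, the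
`x`-th smallest value is encoded as an infimum, which is meaningful for `1 ≤ x` and `x` smaller
than the number of entities. -/
noncomputable def separation (ρ : ℝ) (z : ι → X) (x : ℕ) (i : ι) : ℝ :=
  sInf {r : ℝ | x ≤ {j : ι | j ≠ i ∧ dist (z i) (z j) - 2 * ρ ≤ r}.ncard}

theorem separation_le {ρ : ℝ} {z : ι → X} {x : ℕ} {i : ι} {r : ℝ} (hx : 1 ≤ x)
    (hr : x ≤ {j : ι | j ≠ i ∧ dist (z i) (z j) - 2 * ρ ≤ r}.ncard) :
    separation ρ z x i ≤ r := by
  refine csInf_le ⟨-(2 * ρ), fun s hs ↦ ?_⟩ hr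
  obtain ⟨j, -, hj⟩ := nonempty_of_ncard_ne_zero (Nat.one_le_iff_ne_zero.mp (hx.trans hs))
  linarith [dist_nonneg (x := z i) (y := z j)]

theorem ncard_dist_lt_add_separation_lt [Finite ι] {ρ : ℝ} (hρ : 0 ≤ ρ) (z : ι → X) {x : ℕ}
    (hx : 1 ≤ x) (i : ι) :
    {j : ι | j ≠ i ∧ dist (z i) (z j) < ρ + separation ρ z x i}.ncard < x := by
  by_contra! hcard
  obtain ⟨k, ⟨-, hk⟩, hmax⟩ := exists_max_image _ (fun j ↦ dist (z i) (z j)) (toFinite _)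
    (nonempty_of_ncard_ne_zero (Nat.one_le_iff_ne_zero.mp (hx.trans hcard)))
  have hsep : separation ρ z x i ≤ dist (z i) (z k) - 2 * ρ :=
    separation_le hx <| hcard.trans <| ncard_le_ncard fun j hj ↦
      ⟨hj.1, sub_le_sub_right (hmax j hj) _⟩
  linarith

end Separation

theorem max_norm_sub_le_of_closedBall_inter_nonempty {E : Type*} [SeminormedAddCommGroup E]
    {p c : E} {r rB : ℝ} (hrB : rB ≤ r) (hinter : (closedBall p r ∩ closedBall c rB).Nonempty) :
    max ‖p - c‖ (2 * rB) ≤ r + rB := by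
  refine max_le ?_ (by linarith)
  rw [← dist_eq_norm]
  exact dist_le_add_of_nonempty_closedBall_inter_closedBall hinter

section Counting

variable {E ι : Type*} [NormedAddCommGroup E] [NormedSpace ℝ E] [Finite ι]
  {z : ι → E} {r : ι → ℝ} {x : ℕ}

theorem card_le_of_dist_truncatedDirection_lt_half {c : E} {rB : ℝ} (hz : Function.Injective z)
    (hr : ∀ i, {j | j ≠ i ∧ dist (z i) (z j) < r i}.ncard < x) (A : Finset ι)
    (hA : ∀ i ∈ A, max ‖z i - c‖ (2 * rB) ≤ r i + rB)
    (hdir : ∀ i ∈ A, ∀ j ∈ A, dist (truncatedDirection (2 * rB) (z i - c))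
      (truncatedDirection (2 * rB) (z j - c)) < 1 / 2) :
    A.card ≤ x := by
  classical
  rcases A.eq_empty_or_nonempty with rfl | hne
  · simp
  obtain ⟨i, hi, hmax⟩ := A.exists_max_image (fun j ↦ max ‖z j - c‖ (2 * rB)) hne
  have hclose : ↑(A.erase i) ⊆ {j | j ≠ i ∧ dist (z i) (z j) < r i} := by
    intro j hj
    obtain ⟨hji, hjA⟩ := Finset.mem_erase.mp hj
    have hpq : z i - c ≠ z j - c := fun h ↦ hji (hz (sub_left_injective h)).symm
    refine ⟨hji, ?_⟩
    calc dist (z i) (z j) = dist (z i - c) (z j - c) := (dist_sub_right _ _ _).symm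
      _ < max ‖z i - c‖ (2 * rB) - 2 * rB / 2 :=
          dist_lt_of_dist_truncatedDirection_lt_half hpq (hmax j hjA) (hdir i hi j hjA)
      _ ≤ r i := by linarith [hA i hi]
  calc A.card = (A.erase i).card + 1 := (Finset.card_erase_add_one hi).symm
    _ ≤ {j | j ≠ i ∧ dist (z i) (z j) < r i}.ncard + 1 := by
        rw [← ncard_coe_finset]
        gcongr
        exact toFinite _
    _ ≤ x := hr i

theorem ncard_closedBall_inter_nonempty_le_of_coloring {K : ℕ}
    (color : closedBall (0 : E) 1 → Fin K)
    (hcolor : ∀ u v, color u = color v → dist u v < 1 / 2) (hz : Function.Injective z)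
    (hr : ∀ i, {j | j ≠ i ∧ dist (z i) (z j) < r i}.ncard < x) (c : E) (rB : ℝ) :
    {i | rB ≤ r i ∧ (closedBall (z i) (r i) ∩ closedBall c rB).Nonempty}.ncard ≤ K * x := by
  classical
  set S := {i | rB ≤ r i ∧ (closedBall (z i) (r i) ∩ closedBall c rB).Nonempty}
  have hS : S.Finite := toFinite S
  let direction (i : ι) : closedBall (0 : E) 1 :=
    ⟨truncatedDirection (2 * rB) (z i - c),
      mem_closedBall_zero_iff.mpr (norm_truncatedDirection_le_one _ _)⟩
  have hfiber (k : Fin K) : (hS.toFinset.filter fun i ↦ color (direction i) = k).card ≤ x := by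
    refine card_le_of_dist_truncatedDirection_lt_half (c := c) (rB := rB) hz hr _ ?_ ?_
    · intro i hi
      obtain ⟨hrB, hinter⟩ := hS.mem_toFinset.mp (Finset.mem_filter.mp hi).1
      exact max_norm_sub_le_of_closedBall_inter_nonempty hrB hinter
    · intro i hi j hj
      exact hcolor (direction i) (direction j)
        ((Finset.mem_filter.mp hi).2.trans (Finset.mem_filter.mp hj).2.symm)
  calc S.ncard = hS.toFinset.card := ncard_eq_toFinset_card S hS
    _ ≤ x * (Finset.univ : Finset (Fin K)).card :=
        Finset.card_le_mul_card_image_of_maps_to (fun i _ ↦ Finset.mem_univ _) x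
          fun k _ ↦ hfiber k
    _ = K * x := by rw [Finset.card_fin, mul_comm]

end Counting

theorem stmt0_general (E : Type*) [NormedAddCommGroup E] [NormedSpace ℝ E]
    [FiniteDimensional ℝ E] :
    ∃ K : ℕ, 0 < K ∧
      ∀ (ι : Type*) [Finite ι] (ρ : ℝ) (z : ι → E) (x : ℕ),
        0 ≤ ρ → Function.Injective z → 1 ≤ x →
        ∀ (c : E) (rB : ℝ),
          {i : ι | rB ≤ ρ + separation ρ z x i ∧
              (closedBall (z i) (ρ + separation ρ z x i) ∩ closedBall c rB).Nonempty}.ncard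
            ≤ K * x := by
  have hball : TotallyBounded (closedBall (0 : E) 1) :=
    (isCompact_closedBall (0 : E) 1).totallyBounded
  obtain ⟨K, color, hcolor⟩ := exists_coloring_dist_lt_of_totallyBounded hball one_half_pos
  refine ⟨K, (color ⟨0, by simp⟩).pos, fun ι _ ρ z x hρ hz hx ↦ ?_⟩
  exact ncard_closedBall_inter_nonempty_le_of_coloring color hcolor hz
    (ncard_dist_lt_add_separation_lt hρ z hx)

theorem stmt0 (d : ℕ) (hd : 1 ≤ d) :
    ∃ K : ℕ, 0 < K ∧
      ∀ (n : ℕ) (ρ : ℝ) (z : Fin n → EuclideanSpace ℝ (Fin d)) (x : ℕ),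
        0 ≤ ρ →
        Function.Injective z →
        (∀ i j : Fin n, i ≠ j → 2 * ρ ≤ dist (z i) (z j)) →
        1 ≤ x → x ≤ n - 1 →
        ∀ (c : EuclideanSpace ℝ (Fin d)) (rB : ℝ), 0 ≤ rB →
          {i : Fin n | rB ≤ ρ + xSep ρ z x i ∧
              (closedBall (z i) (ρ + xSep ρ z x i) ∩ closedBall c rB).Nonempty}.ncard
            ≤ K * x := by
  obtain ⟨K, hK, hcount⟩ := stmt0_general (EuclideanSpace ℝ (Fin d))
  exact ⟨K, hK, fun n ρ z x hρ hz _ hx _ c rB _ ↦ hcount (Fin n) ρ z x hρ hz hx c rB⟩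
end

section
/- Let Z = (z_1, …, z_n) be a non-overlapping configuration of n entities of radius ρ ≥ 0 in ℝ^d, let 1 ≤ x ≤ n−1 be an integer, and let E be any subset of the entities. Then there exists a subset I ⊆ E with x·|I| ≥ |E| such that for all distinct entities e_i, e_j ∈ I one has ‖z_i − z_j‖ ≥ max{r_i(x), r_j(x)} + ρ. -/
open Metric Set

/-! Call two entities conflicting when they violate the required inequality. Among any finite set of
entities, one with the largest separation has fewer than `x` conflicts: by maximality these involve
only entities strictly closer than its own `x`-th nearest one. Hence the conflict graph is
`(x - 1)`-degenerate, and repeatedly picking such an entity and discarding its conflicts keeps at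
least one entity out of every `x`. -/

section OrderStatistic

variable {ι α : Type*}

/-- `a` is the `k`-th smallest value of `f` on `s`, counted with multiplicity and starting at
`k = 1`: fewer than `k` indices have a value below `a`, and at least `k` have a value at most `a`.
No `a` qualifies when `k = 0` or when `s` has fewer than `k` elements. -/
structure IsNthSmallestOn [LinearOrder α] (f : ι → α) (s : Set ι) (k : ℕ) (a : α) : Prop where
  encard_lt : {j ∈ s | f j < a}.encard < k
  le_encard : k ≤ {j ∈ s | f j ≤ a}.encard

theorem exists_isLeast_setOf_le_ncard [LinearOrder α] (f : ι → α) {s : Set ι} (hs : s.Finite)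
    {k : ℕ} (hk : 1 ≤ k) (hks : k ≤ s.ncard) :
    ∃ a, IsLeast {r | k ≤ {j ∈ s | f j ≤ r}.ncard} a := by
  have attained_below : ∀ t ⊆ s, k ≤ t.ncard →
      ∃ i ∈ t, k ≤ {j ∈ s | f j ≤ f i}.ncard := by
    intro t hts hkt
    obtain ⟨i, hi, hmax⟩ := t.exists_max_image f (hs.subset hts)
      (nonempty_of_ncard_ne_zero (by lia))
    exact ⟨i, hi, hkt.trans <|
      ncard_le_ncard (fun j hj ↦ ⟨hts hj, hmax j hj⟩) (hs.subset (sep_subset _ _))⟩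
  obtain ⟨i₀, hi₀, hki₀⟩ := attained_below s Subset.rfl hks
  obtain ⟨m, ⟨-, hkm⟩, hmin⟩ :=
    {i ∈ s | k ≤ {j ∈ s | f j ≤ f i}.ncard}.exists_min_image f (hs.subset (sep_subset _ _))
      ⟨i₀, hi₀, hki₀⟩
  refine ⟨f m, hkm, fun r hr ↦ ?_⟩
  obtain ⟨i, ⟨his, hir⟩, hki⟩ := attained_below _ (sep_subset _ _) hr
  exact (hmin i ⟨his, hki⟩).trans hir

theorem IsNthSmallestOn.of_isLeast [LinearOrder α] {f : ι → α} {s : Set ι} (hs : s.Finite)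
    {k : ℕ} (hk : 1 ≤ k) {a : α} (ha : IsLeast {r | k ≤ {j ∈ s | f j ≤ r}.ncard} a) :
    IsNthSmallestOn f s k a := by
  have finite_sep (p : ι → Prop) : {j ∈ s | p j}.Finite := hs.subset (sep_subset _ _)
  refine ⟨?_, ?_⟩
  · rw [← (finite_sep _).cast_ncard_eq, Nat.cast_lt]
    by_contra! hle
    obtain ⟨m, ⟨-, hma⟩, hmax⟩ := {j ∈ s | f j < a}.exists_max_image f (finite_sep _)
      (nonempty_of_ncard_ne_zero (by lia))
    have hkm : k ≤ {j ∈ s | f j ≤ f m}.ncard :=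
      hle.trans (ncard_le_ncard (fun j hj ↦ ⟨hj.1, hmax j hj⟩) (finite_sep _))
    exact (ha.2 hkm).not_gt hma
  · rw [← (finite_sep _).cast_ncard_eq, Nat.cast_le]
    exact ha.1

theorem isNthSmallestOn_sInf [ConditionallyCompleteLinearOrder α] (f : ι → α) {s : Set ι}
    (hs : s.Finite) {k : ℕ} (hk : 1 ≤ k) (hks : k ≤ s.ncard) :
    IsNthSmallestOn f s k (sInf {r | k ≤ {j ∈ s | f j ≤ r}.ncard}) := by
  obtain ⟨a, ha⟩ := exists_isLeast_setOf_le_ncard f hs hk hks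
  rw [ha.csInf_eq]
  exact .of_isLeast hs hk ha

end OrderStatistic

theorem isNthSmallestOn_xSep {d n : ℕ} (ρ : ℝ) (z : Fin n → EuclideanSpace ℝ (Fin d)) {x : ℕ}
    (hx1 : 1 ≤ x) (hxn : x ≤ n - 1) (i : Fin n) :
    IsNthSmallestOn (fun j ↦ dist (z i) (z j) - 2 * ρ) {i}ᶜ x (xSep ρ z x i) :=
  isNthSmallestOn_sInf _ (toFinite _) hx1 (by
    rwa [ncard_compl, ncard_singleton, Nat.card_fin])

theorem exists_isIndepSet_card_le_mul_card {V : Type*} (G : SimpleGraph V) [DecidableRel G.Adj]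
    (k : ℕ) (E : Finset V)
    (degenerate : ∀ F ⊆ E, F.Nonempty → ∃ v ∈ F, (F.filter (G.Adj v)).card < k) :
    ∃ I ⊆ E, E.card ≤ k * I.card ∧ G.IsIndepSet (I : Set V) := by
  classical
  induction E using Finset.strongInduction with
  | H E ih =>
    rcases E.eq_empty_or_nonempty with rfl | hE
    · exact ⟨∅, by simp⟩
    obtain ⟨v, hv, hdeg⟩ := degenerate E Subset.rfl hE
    let N := E.filter fun w ↦ ¬ G.Adj v w
    have hvN : v ∈ N := by simp [N, hv]
    have hNE : N.erase v ⊆ E := (N.erase_subset v).trans (E.filter_subset _)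
    obtain ⟨I, hIN, hcard, hI⟩ := ih (N.erase v)
      (Finset.ssubset_iff_of_subset hNE |>.2 ⟨v, hv, N.notMem_erase v⟩)
      fun F hF ↦ degenerate F (hF.trans hNE)
    have hvI : v ∉ I := fun h ↦ N.notMem_erase v (hIN h)
    refine ⟨insert v I, Finset.insert_subset hv (hIN.trans hNE), ?_, ?_⟩
    · calc E.card = (E.filter (G.Adj v)).card + ((N.erase v).card + 1) := by
            rw [Finset.card_erase_add_one hvN, Finset.card_filter_add_card_filter_not]
        _ ≤ k + k * I.card := by lia
        _ = k * (insert v I).card := by rw [Finset.card_insert_of_notMem hvI]; ring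
    · rw [Finset.coe_insert]
      refine Set.Pairwise.insert hI fun w hw _ ↦ ?_
      have hvw : ¬ G.Adj v w := (Finset.mem_filter.1 (Finset.mem_of_mem_erase (hIN hw))).2
      exact ⟨hvw, fun hwv ↦ hvw hwv.symm⟩

section ConflictGraph

variable {ι X : Type*} [PseudoMetricSpace X]

/-- The graph joining two entities whose centers are too close to both be selected, where
`ρ + σ i` plays the role of the radius `r_i(x)`. -/
def conflictGraph (ρ : ℝ) (z : ι → X) (σ : ι → ℝ) : SimpleGraph ι where
  Adj i j := i ≠ j ∧ dist (z i) (z j) < max (ρ + σ i) (ρ + σ j) + ρ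
  symm := ⟨fun i j h ↦ ⟨h.1.symm, by rw [dist_comm, max_comm]; exact h.2⟩⟩
  loopless := ⟨fun _ h ↦ h.1 rfl⟩

theorem dist_sub_lt_of_conflictGraph_adj {ρ : ℝ} {z : ι → X} {σ : ι → ℝ} {i j : ι}
    (hij : (conflictGraph ρ z σ).Adj i j) (hσ : σ j ≤ σ i) :
    dist (z i) (z j) - 2 * ρ < σ i := by
  have hlt := hij.2
  rw [max_eq_left (by gcongr)] at hlt
  linarith

theorem exists_card_filter_conflictGraph_adj_lt {ρ : ℝ} {z : ι → X} {σ : ι → ℝ}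
    [DecidableRel (conflictGraph ρ z σ).Adj] {x : ℕ} {F : Finset ι} (hF : F.Nonempty)
    (hσ : ∀ i ∈ F, {j ∈ ({i}ᶜ : Set ι) | dist (z i) (z j) - 2 * ρ < σ i}.encard < x) :
    ∃ i ∈ F, (F.filter ((conflictGraph ρ z σ).Adj i)).card < x := by
  obtain ⟨i, hi, hmax⟩ := F.exists_max_image σ hF
  refine ⟨i, hi, ?_⟩
  rw [← Nat.cast_lt (α := ℕ∞), ← encard_coe_eq_coe_finsetCard]
  refine (encard_le_encard fun j hj ↦ ?_).trans_lt (hσ i hi)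
  obtain ⟨hjF, hij⟩ := Finset.mem_filter.1 hj
  exact ⟨hij.1.symm, dist_sub_lt_of_conflictGraph_adj hij (hmax j hjF)⟩

theorem stmt2_general (ρ : ℝ) (z : ι → X) (x : ℕ) (σ : ι → ℝ) (E : Finset ι)
    (hσ : ∀ i ∈ E, IsNthSmallestOn (fun j ↦ dist (z i) (z j) - 2 * ρ) {i}ᶜ x (σ i)) :
    ∃ I ⊆ E, E.card ≤ x * I.card ∧
      ∀ i ∈ I, ∀ j ∈ I, i ≠ j → max (ρ + σ i) (ρ + σ j) + ρ ≤ dist (z i) (z j) := by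
  classical
  obtain ⟨I, hIE, hcard, hI⟩ := exists_isIndepSet_card_le_mul_card (conflictGraph ρ z σ) x E
    fun F hFE hF ↦ exists_card_filter_conflictGraph_adj_lt hF fun i hi ↦ (hσ i (hFE hi)).encard_lt
  exact ⟨I, hIE, hcard, fun i hi j hj hij ↦ not_lt.1 fun hlt ↦ hI hi hj hij ⟨hij, hlt⟩⟩

end ConflictGraph

theorem stmt2 (d n : ℕ) (ρ : ℝ) (hρ : 0 ≤ ρ)
    (z : Fin n → EuclideanSpace ℝ (Fin d))
    (hsep : ∀ i j : Fin n, i ≠ j → 2 * ρ ≤ dist (z i) (z j))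
    (x : ℕ) (hx1 : 1 ≤ x) (hxn : x ≤ n - 1)
    (E : Finset (Fin n)) :
    ∃ I ⊆ E, E.card ≤ x * I.card ∧
      ∀ i ∈ I, ∀ j ∈ I, i ≠ j →
        max (ρ + xSep ρ z x i) (ρ + xSep ρ z x j) + ρ ≤ dist (z i) (z j) :=
  stmt2_general ρ z x (xSep ρ z x) E fun i _ ↦ isNthSmallestOn_xSep ρ z hx1 hxn i
end

section
/- Let Z = (z_1, …, z_n) be a non-overlapping configuration of n entities of radius ρ ≥ 0 in ℝ^d and let 1 ≤ x ≤ n−1 be an integer. Then σ_i(x) ≥ c_{d,x}·ρ for every index i. -/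
open Metric Set

/-- `sepConst d x` is `c_{d,x}`: the infimum of all `c ≥ 0` for which there exist `x` closed
unit balls in `ℝ^d` with pairwise disjoint interiors, one of them distinguished, such that
every one of the `x` balls has its center at distance at most `2 + c` from the center of the
distinguished ball. -/
noncomputable def sepConst (d x : ℕ) : ℝ :=
  sInf {c : ℝ | 0 ≤ c ∧ ∃ z : Fin x → EuclideanSpace ℝ (Fin d),
    (∀ i j : Fin x, i ≠ j →
      Disjoint (interior (closedBall (z i) 1)) (interior (closedBall (z j) 1))) ∧
    ∃ i0 : Fin x, ∀ j : Fin x, dist (z j) (z i0) ≤ 2 + c}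

/-!
If `x` entities `j ≠ i` satisfy `dist (z i) (z j) ≤ 2ρ + r`, then together with `e_i` they form
`x + 1` non-overlapping balls of radius `ρ` centered within `2ρ + r` of `z i`. When `ρ > 0`,
rescaling by `ρ⁻¹` makes them unit balls and shows that `r / ρ` is admissible in the definition of
`c_{d,m}` for every `1 ≤ m ≤ x + 1`; when `ρ = 0` only `0 ≤ r` is needed.
-/

theorem disjoint_interior_closedBall_of_add_le_dist {E : Type*} [SeminormedAddCommGroup E]
    [NormedSpace ℝ E] {p q : E} {r s : ℝ} (hr : r ≠ 0) (hs : s ≠ 0) (h : r + s ≤ dist p q) :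
    Disjoint (interior (closedBall p r)) (interior (closedBall q s)) := by
  rw [interior_closedBall p hr, interior_closedBall q hs]
  exact ball_disjoint_ball h

section

variable {ι : Type*} {d : ℕ} {p : ι → EuclideanSpace ℝ (Fin d)} {T : Set ι} {i : ι}

theorem sepConst_ncard_le {c : ℝ} (hT : T.Finite) (hi : i ∈ T)
    (hsep : T.Pairwise fun j k => 2 ≤ dist (p j) (p k)) (hc : 0 ≤ c)
    (hnear : ∀ j ∈ T, dist (p j) (p i) ≤ 2 + c) : sepConst d T.ncard ≤ c := by
  have : Finite T := hT
  let e : T ≃ Fin T.ncard := Finite.equivFin T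
  refine csInf_le ⟨0, fun _ h => h.1⟩ ⟨hc, fun k => p (e.symm k), fun k l hkl => ?_, e ⟨i, hi⟩,
    fun k => ?_⟩
  · have hne : (e.symm k : ι) ≠ e.symm l := Subtype.coe_injective.ne (e.symm.injective.ne hkl)
    apply disjoint_interior_closedBall_of_add_le_dist one_ne_zero one_ne_zero
    rw [one_add_one_eq_two]
    exact hsep (e.symm k).2 (e.symm l).2 hne
  · simpa only [e.symm_apply_apply] using hnear _ (e.symm k).2

theorem sepConst_ncard_mul_le {ρ r : ℝ} (hT : T.Finite) (hi : i ∈ T)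
    (hsep : T.Pairwise fun j k => 2 * ρ ≤ dist (p j) (p k)) (hρ : 0 ≤ ρ) (hr : 0 ≤ r)
    (hnear : ∀ j ∈ T, dist (p j) (p i) ≤ 2 * ρ + r) : sepConst d T.ncard * ρ ≤ r := by
  obtain rfl | hρ_pos := hρ.eq_or_lt
  · rwa [mul_zero]
  have dist_rescaled (j k : ι) : dist (ρ⁻¹ • p j) (ρ⁻¹ • p k) = dist (p j) (p k) / ρ := by
    rw [dist_smul₀, Real.norm_of_nonneg (inv_nonneg.2 hρ), inv_mul_eq_div]
  rw [← le_div_iff₀ hρ_pos]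
  refine sepConst_ncard_le (p := fun j => ρ⁻¹ • p j) hT hi (fun j hj k hk hjk => ?_)
    (div_nonneg hr hρ) fun j hj => ?_
  · change 2 ≤ dist (ρ⁻¹ • p j) (ρ⁻¹ • p k)
    rw [dist_rescaled, le_div_iff₀ hρ_pos]
    exact hsep hj hk hjk
  · rw [dist_rescaled, div_le_iff₀ hρ_pos, add_mul, div_mul_cancel₀ r hρ_pos.ne']
    exact hnear j hj

end

theorem le_xSep {d n : ℕ} {ρ b : ℝ} {z : Fin n → EuclideanSpace ℝ (Fin d)} {x : ℕ} {i : Fin n}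
    (hx : x ≤ n - 1)
    (h : ∀ r, x ≤ {j | j ≠ i ∧ dist (z i) (z j) - 2 * ρ ≤ r}.ncard → b ≤ r) :
    b ≤ xSep ρ z x i := by
  refine le_csInf ?_ h
  obtain ⟨r, hr⟩ := Finite.exists_le fun j => dist (z i) (z j) - 2 * ρ
  have all_counted : {j | j ≠ i ∧ dist (z i) (z j) - 2 * ρ ≤ r} = {i}ᶜ :=
    Set.ext fun j => and_iff_left (hr j)
  refine ⟨r, ?_⟩
  rwa [mem_ofPred_eq, all_counted, ncard_compl, ncard_singleton, Nat.card_fin]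

theorem stmt5_general (d n : ℕ) (ρ : ℝ) (hρ : 0 ≤ ρ)
    (z : Fin n → EuclideanSpace ℝ (Fin d))
    (hsep : ∀ i j : Fin n, i ≠ j → 2 * ρ ≤ dist (z i) (z j))
    (x : ℕ) (hx1 : 1 ≤ x) (hxn : x ≤ n - 1) (m : ℕ) (hm1 : 1 ≤ m) (hmx : m ≤ x + 1) :
    ∀ i : Fin n, sepConst d m * ρ ≤ xSep ρ z x i := by
  refine fun i => le_xSep hxn fun r hr => ?_
  set N := {j | j ≠ i ∧ dist (z i) (z j) - 2 * ρ ≤ r}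
  have r_nonneg : 0 ≤ r := by
    obtain ⟨j, hji, hjr⟩ : N.Nonempty := nonempty_of_ncard_ne_zero (by lia)
    linarith [hsep i j hji.symm]
  have near : ∀ j ∈ insert i N, dist (z j) (z i) ≤ 2 * ρ + r := by
    rintro j (rfl | ⟨-, hjr⟩)
    · rw [dist_self]
      positivity
    · rw [dist_comm]
      linarith
  have le_ncard : m ≤ (insert i N).ncard := by
    rw [ncard_insert_of_notMem fun hi => hi.1 rfl]
    lia
  obtain ⟨T, hiT, hTN, rfl⟩ := exists_subsuperset_card_eq
    (singleton_subset_iff.2 (mem_insert i N)) ((ncard_singleton i).trans_le hm1) le_ncard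
  exact sepConst_ncard_mul_le T.toFinite (hiT rfl) (fun j _ k _ => hsep j k) hρ r_nonneg
    fun j hj => near j (hTN hj)

theorem stmt5 (d n : ℕ) (hd : 1 ≤ d) (ρ : ℝ) (hρ : 0 ≤ ρ)
    (z : Fin n → EuclideanSpace ℝ (Fin d))
    (hsep : ∀ i j : Fin n, i ≠ j → 2 * ρ ≤ dist (z i) (z j))
    (x : ℕ) (hx1 : 1 ≤ x) (hxn : x ≤ n - 1) :
    ∀ i : Fin n, sepConst d x * ρ ≤ xSep ρ z x i :=
  stmt5_general d n ρ hρ z hsep x hx1 hxn x hx1 x.le_succ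
end

section
/- For every integer d ≥ 1 there exists a constant K = K(d) > 0 with the following property. Let n entities of radius ρ ≥ 0 move in ℝ^d along 1-Lipschitz trajectories ζ_1, …, ζ_n that are non-overlapping at all times, let 1 ≤ x < y ≤ n−1 be integers, and assume σ_i(y,t) > 0 for all i and all t. Let T = [a, b] be a nondegenerate compact time interval, set H(T) := Σ_{i=1}^n ∫_T dt / r_i(y,t), and assume H(T) ≥ 505·n. Let T⁺ := [a, b + (b−a)/2^55]. Then every query schedule whose uncertainty ply is at most x at every time of T⁺ makes at least ((y − x + 1)/(K·y))·H(T) queries during T⁺. -/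
open Metric Set
open scoped ENNReal

open Classical in
/-- The uncertainty region at time `t` of a mobile entity of radius `ρ` with trajectory `ζ`
and query-time set `Q`: the closed ball about `ζ (p t)` of radius `ρ + (t - p t)` where `p t`
is the last query time at or before `t`, and all of space if there is no query before `t`. -/
noncomputable def uRegionM {d : ℕ} (ρ : ℝ) (ζ : ℝ → EuclideanSpace ℝ (Fin d))
    (Q : Set ℝ) (t : ℝ) : Set (EuclideanSpace ℝ (Fin d)) :=
  if (Q ∩ Set.Iic t).Nonempty then
    closedBall (ζ (sSup (Q ∩ Set.Iic t))) (ρ + (t - sSup (Q ∩ Set.Iic t)))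
  else Set.univ

/-!
Give a query of entity `j` at time `τ` the weight `r_j(τ) ^ (1 / 8)`. If the ply is at most `x`,
then at least `q = y - x + 1` of the entities near `i` are queried during the time `R = r_i(t)`
after `t`. It follows that the space-time box of scale `R` about entity `i` at time `t` carries
query weight at least `q / 2 * R ^ (1 / 8)`, by induction on the scale. If all these `q` queries are
made at radii at least `R / 256`, each of them weighs at least half of `R ^ (1 / 8)`. Otherwise some
nearby `j` has a radius below `R / 256`: either it rises to `7 * R / 256`, and two disjoint smaller
boxes of `j` contribute half of the weight each, or it stays small for a time `R`, and a chain of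
boxes of `j` suffices because weight per unit of time is larger at smaller scales.

Multiplied by `r_i(t) ^ (-9 / 8)` the box weight dominates `q / (2 * r_i(t))`, up to boxes that
overshoot the horizon `e`, which cost `3 / (e - t)` and hence only a logarithm after integration.
Conversely, by packing, a single query at radius `r` and time `τ` contributes at time `t` at most
`O(y) * r⁻¹ * (1 + |t - τ| / r) ^ (-9 / 8)` to the sum over `i`, and the integral of this kernel
over `t` is `O(y)`.
-/

open MeasureTheory Filter Topology
open scoped Finset NNReal Pointwise

namespace MobileEntities

section General

lemma csInf_le_iff_le_ncard {ι : Type*} [Finite ι] {f : ι → ℝ} {p : ι → Prop} {k : ℕ}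
    (hk : 1 ≤ k) (hp : k ≤ {j | p j}.ncard) {c : ℝ} :
    sInf {r | k ≤ {j | p j ∧ f j ≤ r}.ncard} ≤ c ↔ k ≤ {j | p j ∧ f j ≤ c}.ncard := by
  set S : Set ℝ := {r | k ≤ {j | p j ∧ f j ≤ r}.ncard}
  have mem_of_le {r r' : ℝ} (hr : r ∈ S) (hrr' : r ≤ r') : r' ∈ S :=
    le_trans (b := {j | p j ∧ f j ≤ r}.ncard) hr
      (ncard_le_ncard fun j hj => ⟨hj.1, hj.2.trans hrr'⟩)
  have hS_eq : S = ⋃ A ∈ {A : Set ι | k ≤ A.ncard ∧ ∀ j ∈ A, p j}, ⋂ j ∈ A, Ici (f j) := by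
    ext r
    simp only [mem_iUnion₂, mem_iInter₂]
    exact ⟨fun hr => ⟨_, ⟨hr, fun j hj => hj.1⟩, fun j hj => hj.2⟩,
      fun ⟨A, hA, hfA⟩ => hA.1.trans (ncard_le_ncard fun j hj => ⟨hA.2 j hj, hfA j hj⟩)⟩
  have hS_closed : IsClosed S := by
    rw [hS_eq]
    exact (toFinite _).isClosed_biUnion fun A _ => isClosed_biInter fun j _ => isClosed_Ici
  have hS_nonempty : S.Nonempty := by
    obtain ⟨M, hM⟩ := (finite_range f).bddAbove
    exact ⟨M, hp.trans (ncard_le_ncard fun j hj => ⟨hj, hM ⟨j, rfl⟩⟩)⟩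
  have hS_bddBelow : BddBelow S := by
    obtain ⟨M, hM⟩ := (finite_range f).bddBelow
    refine ⟨M, fun r hr => ?_⟩
    obtain ⟨j, hj⟩ : {j | p j ∧ f j ≤ r}.Nonempty :=
      nonempty_of_ncard_ne_zero (Nat.one_le_iff_ne_zero.1 (hk.trans hr))
    exact (hM ⟨j, rfl⟩).trans hj.2
  exact ⟨mem_of_le (hS_closed.csInf_mem hS_nonempty hS_bddBelow), csInf_le hS_bddBelow⟩

lemma exists_finset_card_eq_sum_encard {ι α : Type*} [Fintype ι] {A : ι → Set α}
    (hA : ∑ i, ((A i).encard : ℝ≥0∞) ≠ ⊤) :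
    ∃ P : Finset (ι × α), (∀ i, ∀ x ∈ A i, (i, x) ∈ P) ∧
      (#P : ℝ≥0∞) = ∑ i, ((A i).encard : ℝ≥0∞) := by
  have hfin (i : ι) : (A i).Finite := by
    simpa using ENNReal.sum_ne_top.1 hA i (Finset.mem_univ i)
  refine ⟨(Finset.univ.sigma fun i => (hfin i).toFinset).map
    (Equiv.sigmaEquivProd ι α).toEmbedding, by simp, ?_⟩
  simp [(hfin _).encard_eq_coe_toFinset_card]

/-- Every ball of radius `κ * R` is covered by `N` balls of radius `R`, at every scale `R`. This
scale-free form of the doubling property is where the dimension of the space enters. -/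
def HasCoveringBound (X : Type*) [PseudoMetricSpace X] (κ : ℝ) (N : ℕ) : Prop :=
  ∀ (p : X) (R : ℝ≥0), R ≠ 0 → coveringNumber R (closedBall p (κ * R)) ≤ N

lemma exists_hasCoveringBound (E : Type*) [NormedAddCommGroup E] [NormedSpace ℝ E]
    [ProperSpace E] (κ : ℝ) : ∃ N, HasCoveringBound E κ N := by
  obtain ⟨C, hC_sub, hC_fin, hC⟩ := exists_finite_isCover_of_isCompact (one_ne_zero (α := ℝ≥0))
    (isCompact_closedBall (0 : E) κ)
  refine ⟨C.ncard, fun p R hR => ?_⟩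
  set φ : E → E := fun v => p + (R : ℝ) • v
  have hφ_lip : LipschitzWith R φ := LipschitzWith.of_dist_le_mul fun v w => by
    simp [φ, dist_smul₀]
  have hφ_image : φ '' closedBall 0 κ = closedBall p (κ * R) := by
    have hcomp : φ '' closedBall 0 κ = p +ᵥ ((R : ℝ) • closedBall (0 : E) κ) :=
      (image_image (p + ·) ((R : ℝ) • ·) _).symm
    rw [hcomp, smul_closedBall' (NNReal.coe_ne_zero.2 hR), vadd_closedBall, smul_zero,
      vadd_eq_add, add_zero, NNReal.norm_eq, mul_comm]
  have hcover : IsCover R (closedBall p (κ * R)) (φ '' C) := by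
    simpa [hφ_image] using hC.image_lipschitz hφ_lip
  calc coveringNumber R (closedBall p (κ * R))
      ≤ (φ '' C).encard := hcover.coveringNumber_le_encard (hφ_image ▸ image_mono hC_sub)
    _ ≤ C.encard := encard_image_le φ C
    _ = C.ncard := (hC_fin.cast_ncard_eq).symm

lemma exists_dyadic_scale {m u : ℝ} (hm : 0 < m) (hu : m ≤ u) :
    ∃ l : ℕ, 2 ^ l * m ≤ u ∧ u ≤ 2 * (2 ^ l * m) := by
  obtain ⟨l, hl_le, hl_lt⟩ := exists_nat_pow_near ((one_le_div hm).2 hu) one_lt_two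
  rw [le_div_iff₀ hm] at hl_le
  rw [div_lt_iff₀ hm, pow_succ] at hl_lt
  exact ⟨l, hl_le, by linarith⟩

lemma rpow_neg_le_of_two_pow_mul_le {m u s : ℝ} {l : ℕ} (hm : 0 < m) (hs : 1 ≤ s)
    (hu : 2 ^ l * m ≤ u) : u ^ (-s) ≤ m ^ (-s) * (1 / 2) ^ l := by
  have hpow : ((2 : ℝ) ^ l) ^ (-s) ≤ (1 / 2) ^ l :=
    calc ((2 : ℝ) ^ l) ^ (-s) ≤ ((2 : ℝ) ^ l) ^ (-1 : ℝ) :=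
          Real.rpow_le_rpow_of_exponent_le (one_le_pow₀ one_le_two) (by linarith)
      _ = (1 / 2) ^ l := by rw [Real.rpow_neg_one, one_div, inv_pow]
  calc u ^ (-s) ≤ (2 ^ l * m) ^ (-s) :=
        Real.rpow_le_rpow_of_nonpos (by positivity) hu (by linarith)
    _ = m ^ (-s) * ((2 : ℝ) ^ l) ^ (-s) := by rw [Real.mul_rpow (by positivity) hm.le, mul_comm]
    _ ≤ m ^ (-s) * (1 / 2) ^ l := by gcongr

lemma sum_rpow_neg_le_of_card_dyadic_le {ι : Type*} {I : Finset ι} {f : ι → ℝ} {m s : ℝ} {B : ℕ}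
    (hm : 0 < m) (hs : 1 ≤ s) (hf : ∀ i ∈ I, m ≤ f i)
    (hB : ∀ R > 0, ∀ J ⊆ I, (∀ i ∈ J, R ≤ f i ∧ f i ≤ 2 * R) → #J ≤ B) :
    ∑ i ∈ I, f i ^ (-s) ≤ 2 * B * m ^ (-s) := by
  choose! l hl using fun i hi => exists_dyadic_scale hm (hf i hi)
  have hlevel (k : ℕ) : ∑ i ∈ I with l i = k, f i ^ (-s) ≤ B * m ^ (-s) * (1 / 2) ^ k := by
    have hscale : ∀ i ∈ I.filter (l · = k), 2 ^ k * m ≤ f i ∧ f i ≤ 2 * (2 ^ k * m) := by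
      intro i hi
      obtain ⟨hiI, rfl⟩ := Finset.mem_filter.1 hi
      exact hl i hiI
    have hcard : #{i ∈ I | l i = k} ≤ B :=
      hB (2 ^ k * m) (by positivity) _ (Finset.filter_subset _ _) hscale
    calc ∑ i ∈ I with l i = k, f i ^ (-s)
        ≤ #{i ∈ I | l i = k} • (m ^ (-s) * (1 / 2) ^ k) := Finset.sum_le_card_nsmul _ _ _
          fun i hi => rpow_neg_le_of_two_pow_mul_le hm hs (hscale i hi).1
      _ ≤ B * m ^ (-s) * (1 / 2) ^ k := by rw [nsmul_eq_mul, mul_assoc]; gcongr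
  have hmaps : ∀ i ∈ I, l i ∈ Finset.range (I.sup l + 1) := fun i hi =>
    Finset.mem_range.2 (Nat.lt_succ_of_le (Finset.le_sup hi))
  calc ∑ i ∈ I, f i ^ (-s)
      = ∑ k ∈ Finset.range (I.sup l + 1), ∑ i ∈ I with l i = k, f i ^ (-s) :=
        (Finset.sum_fiberwise_of_maps_to hmaps _).symm
    _ ≤ ∑ k ∈ Finset.range (I.sup l + 1), B * m ^ (-s) * (1 / 2) ^ k :=
        Finset.sum_le_sum fun k _ => hlevel k
    _ ≤ B * m ^ (-s) * 2 := by rw [← Finset.mul_sum]; gcongr; exact sum_geometric_two_le _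
    _ = 2 * B * m ^ (-s) := by ring

lemma exists_mul_sub_le_of_forall_step {F step : ℝ → ℝ} {a b κ M : ℝ} (hab : a ≤ b)
    (hcont : ContinuousOn step (Icc a b)) (hpos : ∀ s ∈ Icc a b, 0 < step s)
    (hM : ∀ s ∈ Icc a b, step s ≤ M) (hFa : 0 ≤ F a)
    (hF : ∀ s ∈ Icc a b, F s + κ * step s ≤ F (s + step s)) :
    ∃ e ∈ Icc b (b + M), κ * (e - a) ≤ F e := by
  obtain ⟨s₀, hs₀, hmin⟩ := isCompact_Icc.exists_isMinOn (nonempty_Icc.2 hab) hcont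
  by_contra! hcontra
  have hchain (N : ℕ) : ∃ e ∈ Icc a b, a + N * step s₀ ≤ e ∧ κ * (e - a) ≤ F e := by
    induction N with
    | zero => exact ⟨a, left_mem_Icc.2 hab, by simp, by simpa using hFa⟩
    | succ N ih =>
      obtain ⟨e, he, hNe, hFe⟩ := ih
      have hFe' : κ * (e + step e - a) ≤ F (e + step e) := by linarith [hF e he]
      have hle : e + step e ≤ b := by
        by_contra! hlt
        exact hFe'.not_gt (hcontra _ ⟨hlt.le, add_le_add he.2 (hM e he)⟩)
      have hstep : step s₀ ≤ step e := hmin he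
      exact ⟨e + step e, ⟨by linarith [he.1, hpos e he], hle⟩, by push_cast; linarith, hFe'⟩
  obtain ⟨N, hN⟩ := exists_nat_gt ((b - a) / step s₀)
  rw [div_lt_iff₀ (hpos s₀ hs₀)] at hN
  obtain ⟨e, he, hNe, -⟩ := hchain N
  linarith [he.2]

lemma sum_intervalIntegral_le_sum {α β : Type*} {I : Finset α} {J : Finset β} {f : α → ℝ → ℝ}
    {g : β → ℝ → ℝ} {a b : ℝ} (hab : a ≤ b) (hf : ∀ i ∈ I, IntervalIntegrable (f i) volume a b)
    (hg : ∀ j ∈ J, IntervalIntegrable (g j) volume a b)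
    (hfg : ∀ t ∈ Icc a b, ∑ i ∈ I, f i t ≤ ∑ j ∈ J, g j t) :
    ∑ i ∈ I, ∫ t in a..b, f i t ≤ ∑ j ∈ J, ∫ t in a..b, g j t := by
  rw [← intervalIntegral.integral_finsetSum hf, ← intervalIntegral.integral_finsetSum hg]
  refine intervalIntegral.integral_mono_on hab ?_ ?_ hfg
  · simpa only [Finset.sum_fn] using IntervalIntegrable.sum I hf
  · simpa only [Finset.sum_fn] using IntervalIntegrable.sum J hg

lemma integrable_dilation {φ : ℝ → ℝ} (hφ : Integrable φ) {r : ℝ} (hr : r ≠ 0) (τ : ℝ) :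
    Integrable fun t => r⁻¹ * φ ((t - τ) / r) :=
  ((hφ.comp_div hr).comp_sub_right τ).const_mul r⁻¹

lemma intervalIntegral_dilation_le {φ : ℝ → ℝ} (hφ : Integrable φ) (hφ_nonneg : ∀ v, 0 ≤ φ v)
    {r : ℝ} (hr : 0 < r) (τ : ℝ) {a b : ℝ} (hab : a ≤ b) :
    ∫ t in a..b, r⁻¹ * φ ((t - τ) / r) ≤ ∫ v, φ v :=
  calc ∫ t in a..b, r⁻¹ * φ ((t - τ) / r)
      ≤ ∫ t, r⁻¹ * φ ((t - τ) / r) := by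
        rw [intervalIntegral.integral_of_le hab]
        exact setIntegral_le_integral (integrable_dilation hφ hr.ne' τ)
          (.of_forall fun t => mul_nonneg (by positivity) (hφ_nonneg _))
    _ = ∫ v, φ v := by
        rw [integral_const_mul, integral_sub_right_eq_self (fun t => φ (t / r)) τ,
          Measure.integral_comp_div, abs_of_pos hr, smul_eq_mul, inv_mul_cancel_left₀ hr.ne']

lemma integrable_one_add_abs_rpow : Integrable fun v : ℝ => (1 + |v|) ^ (-(9 / 8) : ℝ) :=
  integrable_one_add_norm (by rw [Module.finrank_self]; norm_num)

lemma intervalIntegrable_inv_sub {a b e : ℝ} (hab : a ≤ b) (hbe : b < e) :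
    IntervalIntegrable (fun t => (e - t)⁻¹) volume a b := by
  refine ContinuousOn.intervalIntegrable_of_Icc hab fun t ht => ContinuousAt.continuousWithinAt ?_
  have : e - t ≠ 0 := by linarith [ht.2]
  fun_prop (disch := assumption)

lemma integral_inv_sub {a b e : ℝ} (hab : a ≤ b) (hbe : b < e) :
    ∫ t in a..b, (e - t)⁻¹ = Real.log ((e - a) / (e - b)) := by
  rw [intervalIntegral.integral_comp_sub_left (fun t => t⁻¹),
    integral_inv_of_pos (by linarith) (by linarith)]

lemma rpow_neg_nine_eighths_mul_rpow {r : ℝ} (hr : 0 < r) :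
    r ^ (-(9 / 8) : ℝ) * r ^ (1 / 8 : ℝ) = r⁻¹ := by
  rw [← Real.rpow_add hr, ← Real.rpow_neg_one]
  norm_num

lemma rpow_one_div_256_mul {R : ℝ} (hR : 0 ≤ R) :
    (1 / 256 * R) ^ (1 / 8 : ℝ) = 1 / 2 * R ^ (1 / 8 : ℝ) := by
  rw [Real.mul_rpow (by norm_num) hR, show (1 / 256 : ℝ) = (1 / 2) ^ (8 : ℝ) by norm_num,
    ← Real.rpow_mul (by norm_num)]
  norm_num

lemma three_mul_rpow_mul_le_rpow {u R : ℝ} (hu : 0 < u) (huR : 9 * u ≤ R) :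
    3 * R ^ (-(7 / 8) : ℝ) * u ≤ u ^ (1 / 8 : ℝ) := by
  have hR : 0 < R := by linarith
  have hthree : (3 : ℝ) ≤ 9 ^ (7 / 8 : ℝ) :=
    calc (3 : ℝ) = 9 ^ (1 / 2 : ℝ) := by
          rw [show (9 : ℝ) = 3 ^ (2 : ℝ) by norm_num, ← Real.rpow_mul (by norm_num)]
          norm_num
      _ ≤ 9 ^ (7 / 8 : ℝ) := Real.rpow_le_rpow_of_exponent_le (by norm_num) (by norm_num)
  calc 3 * R ^ (-(7 / 8) : ℝ) * u
      ≤ 9 ^ (7 / 8 : ℝ) * (9 * u) ^ (-(7 / 8) : ℝ) * u := by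
        gcongr ?_ * ?_ * u
        exact Real.rpow_le_rpow_of_nonpos (by positivity) huR (by norm_num)
    _ = u ^ (-(7 / 8) : ℝ) * u := by
        rw [Real.mul_rpow (by norm_num) hu.le, ← mul_assoc, ← Real.rpow_add (by norm_num)]
        norm_num
    _ = u ^ (1 / 8 : ℝ) := by
        rw [← Real.rpow_add_one hu.ne']
        norm_num

end General

variable {ι X : Type*} [PseudoMetricSpace X] {ζ : ι → ℝ → X} {r : ι → ℝ → ℝ}

/-- `r` is the `y`-radius function of entities of radius `ρ` on `1`-Lipschitz trajectories `ζ`, all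
of whose `y`-separations are positive. The `y`-th smallest distance from `ζ i t` to the other
centres is `ρ + r i t`; the centre `ζ i t` itself is counted in `lt_ncard_iff`, whence the strict
inequality. -/
structure IsRadius (ρ : ℝ) (y : ℕ) (ζ : ι → ℝ → X) (r : ι → ℝ → ℝ) : Prop where
  nonneg : 0 ≤ ρ
  lipschitz : ∀ i, LipschitzWith 1 (ζ i)
  lt_radius : ∀ i t, ρ < r i t
  lt_ncard_iff : ∀ i t D, y < {j | dist (ζ i t) (ζ j t) ≤ D}.ncard ↔ ρ + r i t ≤ D

namespace IsRadius

variable {ρ : ℝ} {y : ℕ}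

lemma pos (h : IsRadius ρ y ζ r) (i : ι) (t : ℝ) : 0 < r i t := h.nonneg.trans_lt (h.lt_radius i t)

lemma dist_le (h : IsRadius ρ y ζ r) (i : ι) (s t : ℝ) : dist (ζ i s) (ζ i t) ≤ |s - t| := by
  simpa [Real.dist_eq] using (h.lipschitz i).dist_le_mul s t

section Finite

variable [Finite ι]

lemma radius_le_add (h : IsRadius ρ y ζ r) (i j : ι) (s t : ℝ) :
    r j s ≤ r i t + dist (ζ j s) (ζ i t) + |s - t| := by
  have hcount : y < {k | dist (ζ j s) (ζ k s) ≤
      ρ + r i t + dist (ζ j s) (ζ i t) + |s - t|}.ncard := by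
    refine ((h.lt_ncard_iff i t _).2 le_rfl).trans_le (ncard_le_ncard fun k hk => ?_)
    have hk : dist (ζ i t) (ζ k t) ≤ ρ + r i t := hk
    have hkst := h.dist_le k t s
    rw [abs_sub_comm] at hkst
    exact (dist_triangle4 _ (ζ i t) (ζ k t) _).trans (by linarith)
  linarith [(h.lt_ncard_iff j s _).1 hcount]

lemma lipschitzWith_radius (h : IsRadius ρ y ζ r) (i : ι) : LipschitzWith 2 (r i) :=
  LipschitzWith.of_le_add_mul 2 fun s t => by
    rw [Real.dist_eq, NNReal.coe_ofNat]
    linarith [h.radius_le_add i i s t, h.dist_le i s t]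

lemma continuous_radius (h : IsRadius ρ y ζ r) (i : ι) : Continuous (r i) :=
  (h.lipschitzWith_radius i).continuous

lemma exists_pos_forall_le (h : IsRadius ρ y ζ r) (a e : ℝ) :
    ∃ m > 0, ∀ i, ∀ t ∈ Icc a e, m ≤ r i t := by
  have hsmall (i : ι) : ∀ᶠ m in 𝓝[>] (0 : ℝ), ∀ t ∈ Icc a e, m ≤ r i t := by
    rcases (Icc a e).eq_empty_or_nonempty with hempty | hne
    · simp [hempty]
    · obtain ⟨s, -, hs⟩ := isCompact_Icc.exists_isMinOn hne (h.continuous_radius i).continuousOn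
      filter_upwards [Ioc_mem_nhdsGT (h.pos i s)] with m hm t ht using hm.2.trans (hs ht)
  exact (eventually_mem_nhdsWithin.and (eventually_all.2 hsmall)).exists

lemma card_le_of_forall_dist_le (h : IsRadius ρ y ζ r) {t R : ℝ} {c : X} {I : Finset ι}
    (hR : ∀ i ∈ I, R ≤ r i t) (hI : ∀ i ∈ I, dist (ζ i t) c ≤ R / 3) : #I ≤ y := by
  by_contra! hcard
  obtain ⟨i, hi⟩ := Finset.card_pos.1 (Nat.zero_lt_of_lt hcard)
  have hcount : y < {j | dist (ζ i t) (ζ j t) ≤ 2 * (R / 3)}.ncard := by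
    rw [← ncard_coe_finset] at hcard
    refine hcard.trans_le (ncard_le_ncard fun j hj => (dist_triangle_right _ _ c).trans ?_)
    linarith [hI i hi, hI j hj]
  linarith [(h.lt_ncard_iff i t _).1 hcount, hR i hi, h.nonneg, h.pos i t]

lemma card_le_mul_of_forall_dist_le (h : IsRadius ρ y ζ r) {N : ℕ}
    (hN : HasCoveringBound X 36 N)
    {p : X} {t R : ℝ} (hR : 0 < R) {I : Finset ι} (hIR : ∀ i ∈ I, R ≤ r i t)
    (hI : ∀ i ∈ I, dist (ζ i t) p ≤ 12 * R) : #I ≤ N * y := by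
  classical
  lift R to ℝ≥0 using hR.le
  have hN' := hN p (R / 3) (div_ne_zero (by exact_mod_cast hR.ne') (by norm_num))
  have hne_top : coveringNumber (R / 3) (closedBall p (36 * (R / 3 : ℝ≥0))) ≠ ⊤ :=
    ne_top_of_le_ne_top (ENat.natCast_ne_top N) hN'
  have hcard := (encard_minimalCover hne_top).trans_le hN'
  set C : Finset X := finite_minimalCover.toFinset
  have hcenter : ∀ i ∈ I, ∃ c ∈ C, dist (ζ i t) c ≤ R / 3 := by
    intro i hi
    have hmem : ζ i t ∈ closedBall p (36 * (R / 3 : ℝ≥0)) := by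
      have := hI i hi
      rw [mem_closedBall, NNReal.coe_div, NNReal.coe_ofNat]
      linarith
    obtain ⟨c, hc, hdist⟩ := mem_iUnion₂.1
      (isCover_iff_subset_iUnion_closedBall.1 (isCover_minimalCover hne_top) hmem)
    exact ⟨c, finite_minimalCover.mem_toFinset.2 hc, by simpa using hdist⟩
  have : Nonempty X := ⟨p⟩
  choose! c hcC hc using hcenter
  calc #I ≤ y * #C := Finset.card_le_mul_card_image_of_maps_to (f := c) hcC y fun b _ =>
        h.card_le_of_forall_dist_le (c := b) (fun i hi => hIR i (Finset.mem_filter.1 hi).1)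
          fun i hi => by
            obtain ⟨hiI, rfl⟩ := Finset.mem_filter.1 hi
            exact hc i hiI
    _ ≤ N * y := by
        rw [mul_comm]
        rw [finite_minimalCover.encard_eq_coe_toFinset_card] at hcard
        gcongr
        exact_mod_cast hcard

lemma sum_rpow_neg_le (h : IsRadius ρ y ζ r) {N : ℕ}
    (hN : HasCoveringBound X 36 N)
    {p : X} {t m s : ℝ} (hm : 0 < m) (hs : 1 ≤ s) {I : Finset ι} (hIm : ∀ i ∈ I, m ≤ r i t)
    (hI : ∀ i ∈ I, dist (ζ i t) p ≤ 6 * r i t) :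
    ∑ i ∈ I, r i t ^ (-s) ≤ 2 * (N * y) * m ^ (-s) := by
  rw [← Nat.cast_mul]
  refine sum_rpow_neg_le_of_card_dyadic_le hm hs hIm fun R hR J hJI hJ => ?_
  exact h.card_le_mul_of_forall_dist_le hN hR (fun i hi => (hJ i hi).1) fun i hi => by
    linarith [hI i (hJI hi), (hJ i hi).2]

end Finite

end IsRadius

/-- The space-time box of radius `D` about `p` over the time window `(s, e]`: the pairs `(j, τ)`
of an entity and a time of the window at which that entity is within `D` of `p`. -/
def box (ζ : ι → ℝ → X) (p : X) (D s e : ℝ) : Set (ι × ℝ) :=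
  {z | z.2 ∈ Ioc s e ∧ dist (ζ z.1 z.2) p ≤ D}

/-- The box attached to the entity `i` at time `t`, at the scale of its radius `r i t`: queries in
it are the ones that the uncertainty of the entities near `i` forces after time `t`. -/
def entityBox (ζ : ι → ℝ → X) (r : ι → ℝ → ℝ) (i : ι) (t : ℝ) : Set (ι × ℝ) :=
  box ζ (ζ i t) (6 * r i t) t (t + 3 * r i t)

/-- The total weight of the queries of the finite set `P` that lie in `S`, where a query `(j, τ)`
weighs `r j τ ^ (1 / 8)`. -/
noncomputable def queryWeight (r : ι → ℝ → ℝ) (P : Finset (ι × ℝ)) (S : Set (ι × ℝ)) : ℝ :=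
  ∑ z ∈ P, S.indicator (fun z => r z.1 z.2 ^ (1 / 8 : ℝ)) z

/-- The queries in the box of entity `i` at time `t` weigh at least as much as `q / 2` queries made
at radius `r i t`. -/
def IsHeavy (ζ : ι → ℝ → X) (r : ι → ℝ → ℝ) (P : Finset (ι × ℝ)) (q : ℕ) (i : ι) (t : ℝ) : Prop :=
  q / 2 * r i t ^ (1 / 8 : ℝ) ≤ queryWeight r P (entityBox ζ r i t)

/-- Whenever `[t, t + r i t]` is contained in `[a, e]`, at least `q` entities within `2 * r i t` of
`i` at time `t` have a query of `P` in `(t, t + r i t]`. This is the only consequence of a bound on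
the uncertainty ply that matters for the number of queries. -/
def NeighborsQueried (ζ : ι → ℝ → X) (r : ι → ℝ → ℝ) (P : Finset (ι × ℝ)) (q : ℕ)
    (a e : ℝ) : Prop :=
  ∀ i t, a ≤ t → t + r i t ≤ e → q ≤ {j | dist (ζ j t) (ζ i t) ≤ 2 * r i t ∧
    ∃ τ ∈ Ioc t (t + r i t), (j, τ) ∈ P}.ncard

lemma box_subset_box {p p' : X} {D D' s s' e e' : ℝ} (hs : s' ≤ s) (he : e ≤ e')
    (hD : dist p p' + D ≤ D') : box ζ p D s e ⊆ box ζ p' D' s' e' := fun z hz =>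
  ⟨Ioc_subset_Ioc hs he hz.1, (dist_triangle _ p _).trans (by linarith [hz.2])⟩

lemma disjoint_box {p p' : X} {D D' s s' e e' : ℝ} (h : e ≤ s') :
    Disjoint (box ζ p D s e) (box ζ p' D' s' e') :=
  disjoint_left.2 fun _ hz hz' => (hz.1.2.trans h).not_gt hz'.1.1

section queryWeight

variable {P : Finset (ι × ℝ)} {S T U : Set (ι × ℝ)}

lemma indicator_rpow_nonneg (hr : ∀ i t, 0 ≤ r i t) (z : ι × ℝ) :
    0 ≤ S.indicator (fun z => r z.1 z.2 ^ (1 / 8 : ℝ)) z :=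
  indicator_nonneg (fun _ _ => Real.rpow_nonneg (hr _ _) _) z

lemma queryWeight_nonneg (hr : ∀ i t, 0 ≤ r i t) : 0 ≤ queryWeight r P S :=
  Finset.sum_nonneg fun z _ => indicator_rpow_nonneg hr z

lemma queryWeight_mono (hr : ∀ i t, 0 ≤ r i t) (hST : S ⊆ T) :
    queryWeight r P S ≤ queryWeight r P T :=
  Finset.sum_le_sum fun z _ =>
    indicator_le_indicator_of_subset hST (fun _ => Real.rpow_nonneg (hr _ _) _) z

lemma queryWeight_add_le (hr : ∀ i t, 0 ≤ r i t) (hST : Disjoint S T) (hS : S ⊆ U) (hT : T ⊆ U) :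
    queryWeight r P S + queryWeight r P T ≤ queryWeight r P U := by
  refine le_trans (le_of_eq ?_) (queryWeight_mono hr (union_subset hS hT))
  simp only [queryWeight, indicator_union_of_disjoint hST, Finset.sum_add_distrib]

lemma card_mul_le_queryWeight (hr : ∀ i t, 0 ≤ r i t) {M : Finset ι} {τ : ι → ℝ} {c : ℝ}
    (hP : ∀ j ∈ M, (j, τ j) ∈ P) (hS : ∀ j ∈ M, (j, τ j) ∈ S)
    (hc : ∀ j ∈ M, c ≤ r j (τ j) ^ (1 / 8 : ℝ)) : #M * c ≤ queryWeight r P S := by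
  classical
  have hsub : M.image (fun j => (j, τ j)) ⊆ P := Finset.image_subset_iff.2 hP
  calc #M * c ≤ ∑ j ∈ M, S.indicator (fun z => r z.1 z.2 ^ (1 / 8 : ℝ)) (j, τ j) := by
        rw [← nsmul_eq_mul]
        refine Finset.card_nsmul_le_sum _ _ _ fun j hj => ?_
        rw [indicator_of_mem (hS j hj)]
        exact hc j hj
    _ = ∑ z ∈ M.image (fun j => (j, τ j)), S.indicator (fun z => r z.1 z.2 ^ (1 / 8 : ℝ)) z :=
        (Finset.sum_image fun j _ k _ hjk => (Prod.mk.inj hjk).1).symm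
    _ ≤ queryWeight r P S :=
        Finset.sum_le_sum_of_subset_of_nonneg hsub fun z _ _ => indicator_rpow_nonneg hr z

end queryWeight

section Heavy

variable {ρ : ℝ} {y : ℕ} {P : Finset (ι × ℝ)} {q : ℕ} {a e : ℝ} {i j : ι} {t : ℝ}

lemma box_subset_entityBox (h : IsRadius ρ y ζ r) {s : ℝ} (hj : dist (ζ j t) (ζ i t) ≤ 2 * r i t)
    (hts : t ≤ s) (hst : s ≤ t + 2 * r i t) (hr : r j s ≤ 7 / 256 * r i t) :
    entityBox ζ r j s ⊆ box ζ (ζ i t) (6 * r i t) s (s + 3 * r j s) := by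
  refine box_subset_box le_rfl le_rfl ?_
  have hdist : dist (ζ j s) (ζ j t) ≤ s - t := by
    simpa [abs_of_nonneg (sub_nonneg.2 hts)] using h.dist_le j s t
  linarith [dist_triangle (ζ j s) (ζ j t) (ζ i t), h.pos i t]

lemma isHeavy_of_forall_queried (h : IsRadius ρ y ζ r) {M : Finset ι} {τ : ι → ℝ} (hM : q ≤ #M)
    (hP : ∀ j ∈ M, (j, τ j) ∈ P) (hτ : ∀ j ∈ M, τ j ∈ Ioc t (t + r i t))
    (hdist : ∀ j ∈ M, dist (ζ j t) (ζ i t) ≤ 2 * r i t)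
    (hr : ∀ j ∈ M, 1 / 256 * r i t ≤ r j (τ j)) : IsHeavy ζ r P q i t := by
  have hR := h.pos i t
  have hmem : ∀ j ∈ M, (j, τ j) ∈ entityBox ζ r i t := by
    intro j hj
    have hjτ : dist (ζ j (τ j)) (ζ j t) ≤ τ j - t := by
      simpa [abs_of_pos (sub_pos.2 (hτ j hj).1)] using h.dist_le j (τ j) t
    refine ⟨⟨(hτ j hj).1, by linarith [(hτ j hj).2]⟩, ?_⟩
    linarith [dist_triangle (ζ j (τ j)) (ζ j t) (ζ i t), hdist j hj, (hτ j hj).2]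
  have hweight : ∀ j ∈ M, 1 / 2 * r i t ^ (1 / 8 : ℝ) ≤ r j (τ j) ^ (1 / 8 : ℝ) := fun j hj => by
    rw [← rpow_one_div_256_mul hR.le]
    exact Real.rpow_le_rpow (by positivity) (hr j hj) (by norm_num)
  calc q / 2 * r i t ^ (1 / 8 : ℝ) = q * (1 / 2 * r i t ^ (1 / 8 : ℝ)) := by ring
    _ ≤ #M * (1 / 2 * r i t ^ (1 / 8 : ℝ)) := by gcongr
    _ ≤ queryWeight r P (entityBox ζ r i t) :=
        card_mul_le_queryWeight (fun i t => (h.pos i t).le) hP hmem hweight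

variable [Finite ι]

-- The radius passes through `c` at a time `u` and later through `7 * c` at a time `v`; as it grows
-- at speed at most `2`, this takes time at least `3 * c`.
lemma IsRadius.exists_add_le_of_rise (h : IsRadius ρ y ζ r) {τ s c : ℝ} (hτs : τ ≤ s) (hc : 0 < c)
    (hτ : r j τ ≤ c) (hs : 7 * c ≤ r j s) :
    ∃ u ∈ Icc τ s, ∃ v ∈ Icc τ s, u + 3 * r j u ≤ v ∧ r j u = c ∧ r j v = 7 * c := by
  obtain ⟨u, ⟨hτu, hus⟩, hu⟩ :=
    intermediate_value_Icc hτs (h.continuous_radius j).continuousOn ⟨hτ, by linarith⟩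
  obtain ⟨v, ⟨huv, hvs⟩, hv⟩ :=
    intermediate_value_Icc hus (h.continuous_radius j).continuousOn ⟨by rw [hu]; linarith, hs⟩
  refine ⟨u, ⟨hτu, hus⟩, v, ⟨hτu.trans huv, hvs⟩, ?_, hu, hv⟩
  have hspeed := (le_abs_self _).trans ((h.lipschitzWith_radius j).dist_le_mul v u)
  rw [Real.dist_eq, NNReal.coe_ofNat, abs_of_nonneg (sub_nonneg.2 huv)] at hspeed
  linarith

lemma isHeavy_of_rise (h : IsRadius ρ y ζ r) {τ s : ℝ} (hj : dist (ζ j t) (ζ i t) ≤ 2 * r i t)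
    (htτ : t ≤ τ) (hτs : τ ≤ s) (hst : s ≤ t + 2 * r i t) (hτ : r j τ ≤ 1 / 256 * r i t)
    (hs : 7 / 256 * r i t ≤ r j s)
    (hsmall : ∀ v ∈ Icc τ s, r j v ≤ 7 / 256 * r i t → IsHeavy ζ r P q j v) :
    IsHeavy ζ r P q i t := by
  have hR := h.pos i t
  have hr (k : ι) (u : ℝ) : 0 ≤ r k u := (h.pos k u).le
  obtain ⟨u, hu_mem, v, hv_mem, huv, hu, hv⟩ :=
    h.exists_add_le_of_rise (c := 1 / 256 * r i t) hτs (by positivity) hτ (by linarith)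
  have hu_le : r j u ≤ 7 / 256 * r i t := by linarith
  have hv_le : r j v ≤ 7 / 256 * r i t := by linarith
  have hsub {w : ℝ} (hw : w ∈ Icc τ s) (hrw : r j w ≤ 7 / 256 * r i t) :
      entityBox ζ r j w ⊆ entityBox ζ r i t :=
    (box_subset_entityBox h hj (htτ.trans hw.1) (hw.2.trans hst) hrw).trans <|
      box_subset_box (htτ.trans hw.1) (by linarith [hw.2]) (by simp)
  have hweight {w : ℝ} (hw : 1 / 256 * r i t ≤ r j w) :
      q / 4 * r i t ^ (1 / 8 : ℝ) ≤ q / 2 * r j w ^ (1 / 8 : ℝ) :=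
    calc q / 4 * r i t ^ (1 / 8 : ℝ) = q / 2 * (1 / 256 * r i t) ^ (1 / 8 : ℝ) := by
          rw [rpow_one_div_256_mul hR.le]; ring
      _ ≤ q / 2 * r j w ^ (1 / 8 : ℝ) := by gcongr
  calc q / 2 * r i t ^ (1 / 8 : ℝ)
      = q / 4 * r i t ^ (1 / 8 : ℝ) + q / 4 * r i t ^ (1 / 8 : ℝ) := by ring
    _ ≤ q / 2 * r j u ^ (1 / 8 : ℝ) + q / 2 * r j v ^ (1 / 8 : ℝ) :=
        add_le_add (hweight hu.ge) (hweight (by linarith))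
    _ ≤ queryWeight r P (entityBox ζ r j u) + queryWeight r P (entityBox ζ r j v) :=
        add_le_add (hsmall u hu_mem hu_le) (hsmall v hv_mem hv_le)
    _ ≤ queryWeight r P (entityBox ζ r i t) :=
        queryWeight_add_le hr (disjoint_box huv) (hsub hu_mem hu_le) (hsub hv_mem hv_le)

-- Consecutive boxes of `j` tile `[τ, τ + r i t]`, and each of them carries weight at least
-- `q / 2 * r i t ^ (-7 / 8)` times its length.
lemma isHeavy_of_stay_small (h : IsRadius ρ y ζ r) {τ : ℝ}
    (hj : dist (ζ j t) (ζ i t) ≤ 2 * r i t) (htτ : t ≤ τ) (hτt : τ ≤ t + r i t)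
    (hsmall : ∀ s ∈ Icc τ (τ + r i t), r j s ≤ 7 / 256 * r i t ∧ IsHeavy ζ r P q j s) :
    IsHeavy ζ r P q i t := by
  have hR := h.pos i t
  have hr (k : ι) (u : ℝ) : 0 ≤ r k u := (h.pos k u).le
  set κ : ℝ := q / 2 * r i t ^ (-(7 / 8) : ℝ) with hκ
  set F : ℝ → ℝ := fun s => queryWeight r P (box ζ (ζ i t) (6 * r i t) τ s)
  have hstep : ∀ s ∈ Icc τ (τ + r i t), F s + κ * (3 * r j s) ≤ F (s + 3 * r j s) := by
    intro s hs
    obtain ⟨hjs, hheavy⟩ := hsmall s hs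
    have hweight : κ * (3 * r j s) ≤ q / 2 * r j s ^ (1 / 8 : ℝ) :=
      calc κ * (3 * r j s) = q / 2 * (3 * r i t ^ (-(7 / 8) : ℝ) * r j s) := by rw [hκ]; ring
        _ ≤ q / 2 * r j s ^ (1 / 8 : ℝ) := by
          gcongr
          exact three_mul_rpow_mul_le_rpow (h.pos j s) (by linarith)
    have hsub := box_subset_entityBox h hj (htτ.trans hs.1) (by linarith [hs.2]) hjs
    calc F s + κ * (3 * r j s) ≤ F s + queryWeight r P (entityBox ζ r j s) := by
          gcongr
          exact hweight.trans hheavy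
      _ ≤ F (s + 3 * r j s) := queryWeight_add_le hr (disjoint_box le_rfl)
          (box_subset_box le_rfl (by linarith [h.pos j s]) (by simp))
          (hsub.trans (box_subset_box hs.1 le_rfl (by simp)))
  obtain ⟨e, he, hFe⟩ := exists_mul_sub_le_of_forall_step (M := 3 * (7 / 256 * r i t))
    (le_add_of_nonneg_right hR.le) ((h.continuous_radius j).const_mul 3).continuousOn
    (fun s _ => mul_pos three_pos (h.pos j s)) (fun s hs => by linarith [(hsmall s hs).1])
    (queryWeight_nonneg hr) hstep
  calc q / 2 * r i t ^ (1 / 8 : ℝ) = κ * r i t := by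
        rw [hκ, mul_assoc, ← Real.rpow_add_one hR.ne']; norm_num
    _ ≤ κ * (e - τ) := by gcongr; linarith [he.1]
    _ ≤ F e := hFe
    _ ≤ queryWeight r P (entityBox ζ r i t) :=
        queryWeight_mono hr (box_subset_box htτ (by linarith [he.2]) (by simp))

lemma isHeavy_of_forall_small (h : IsRadius ρ y ζ r)
    (hq : q ≤ {j | dist (ζ j t) (ζ i t) ≤ 2 * r i t ∧
      ∃ τ ∈ Ioc t (t + r i t), (j, τ) ∈ P}.ncard)
    (hsmall : ∀ j, ∀ s ∈ Icc t (t + 2 * r i t), r j s ≤ 7 / 256 * r i t → IsHeavy ζ r P q j s) :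
    IsHeavy ζ r P q i t := by
  obtain ⟨M, hM⟩ := (toFinite {j | dist (ζ j t) (ζ i t) ≤ 2 * r i t ∧
    ∃ τ ∈ Ioc t (t + r i t), (j, τ) ∈ P}).exists_finset_coe
  have hM_mem : ∀ j ∈ M, dist (ζ j t) (ζ i t) ≤ 2 * r i t ∧
      ∃ τ ∈ Ioc t (t + r i t), (j, τ) ∈ P := fun j hj => hM.subset hj
  rw [← hM, ncard_coe_finset] at hq
  choose! hdist τ hτ hτP using hM_mem
  by_cases hlarge : ∀ j ∈ M, 1 / 256 * r i t ≤ r j (τ j)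
  · exact isHeavy_of_forall_queried h hq hτP hτ hdist hlarge
  push Not at hlarge
  obtain ⟨j, hj, hjτ⟩ := hlarge
  have htτ : t ≤ τ j := (hτ j hj).1.le
  have hτt : τ j ≤ t + r i t := (hτ j hj).2
  by_cases hrise : ∃ s ∈ Icc (τ j) (τ j + r i t), 7 / 256 * r i t ≤ r j s
  · obtain ⟨s, hs, hjs⟩ := hrise
    exact isHeavy_of_rise h (hdist j hj) htτ hs.1 (by linarith [hs.2]) hjτ.le hjs fun v hv =>
      hsmall j v ⟨htτ.trans hv.1, by linarith [hv.2, hs.2]⟩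
  · push Not at hrise
    exact isHeavy_of_stay_small h (hdist j hj) htτ hτt fun s hs =>
      ⟨(hrise s hs).le, hsmall j s ⟨htτ.trans hs.1, by linarith [hs.2]⟩ (hrise s hs).le⟩

lemma IsRadius.isHeavy (h : IsRadius ρ y ζ r) (hq : NeighborsQueried ζ r P q a e) :
    ∀ {i t}, a ≤ t → t + 3 * r i t ≤ e → IsHeavy ζ r P q i t := by
  obtain ⟨m, hm, hmr⟩ := h.exists_pos_forall_le a e
  have hbelow (l : ℕ) : ∀ i t, a ≤ t → t + 3 * r i t ≤ e → r i t < 2 ^ l * m →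
      IsHeavy ζ r P q i t := by
    induction l with
    | zero =>
      intro i t hat hte hlt
      linarith [hmr i t ⟨hat, by linarith [h.pos i t]⟩]
    | succ l ih =>
      intro i t hat hte hlt
      have hR := h.pos i t
      rw [pow_succ] at hlt
      exact isHeavy_of_forall_small h (hq i t hat (by linarith)) fun j s hs hjs =>
        ih j s (hat.trans hs.1) (by linarith [hs.2]) (by linarith)
  intro i t hat hte
  obtain ⟨l, hl⟩ := pow_unbounded_of_one_lt (r i t / m) one_lt_two
  exact hbelow l i t hat hte ((div_lt_iff₀ hm).1 hl)

end Heavy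

section DoubleCounting

variable {ρ : ℝ} {y N : ℕ} {P : Finset (ι × ℝ)} {q : ℕ} {a b e t : ℝ}

section Finite

variable [Finite ι]

lemma IsRadius.inv_sub_le_rpow_mul_queryWeight (h : IsRadius ρ y ζ r)
    (hq : NeighborsQueried ζ r P q a e) (hat : a ≤ t) (hte : t < e) (i : ι) :
    q / 2 * ((r i t)⁻¹ - 3 * (e - t)⁻¹) ≤
      r i t ^ (-(9 / 8) : ℝ) * queryWeight r P (entityBox ζ r i t) := by
  have hR := h.pos i t
  have he : 0 < e - t := sub_pos.2 hte
  rcases le_or_gt (t + 3 * r i t) e with hfits | hlong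
  · calc q / 2 * ((r i t)⁻¹ - 3 * (e - t)⁻¹) ≤ q / 2 * (r i t)⁻¹ := by
          gcongr; exact sub_le_self _ (by positivity)
      _ = r i t ^ (-(9 / 8) : ℝ) * (q / 2 * r i t ^ (1 / 8 : ℝ)) := by
          rw [← rpow_neg_nine_eighths_mul_rpow hR]; ring
      _ ≤ r i t ^ (-(9 / 8) : ℝ) * queryWeight r P (entityBox ζ r i t) := by
          gcongr; exact h.isHeavy hq hat hfits
  · have hinv : (r i t)⁻¹ ≤ 3 * (e - t)⁻¹ := by
      rw [← div_eq_mul_inv, inv_le_iff_one_le_mul₀ hR, div_mul_eq_mul_div, one_le_div he]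
      linarith
    calc q / 2 * ((r i t)⁻¹ - 3 * (e - t)⁻¹) ≤ 0 :=
          mul_nonpos_of_nonneg_of_nonpos (by positivity) (by linarith)
      _ ≤ r i t ^ (-(9 / 8) : ℝ) * queryWeight r P (entityBox ζ r i t) :=
          mul_nonneg (by positivity) (queryWeight_nonneg fun i t => (h.pos i t).le)

lemma IsRadius.add_abs_sub_le_of_mem_entityBox (h : IsRadius ρ y ζ r) {i j : ι} {τ : ℝ}
    (hz : (j, τ) ∈ entityBox ζ r i t) : r j τ + |t - τ| ≤ 13 * r i t := by
  obtain ⟨⟨htτ, hτt⟩, hdist⟩ := hz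
  have htime : |τ - t| ≤ 3 * r i t := by
    rw [abs_of_pos (sub_pos.2 htτ)]
    linarith
  rw [abs_sub_comm]
  linarith [h.radius_le_add i j τ t]

lemma IsRadius.intervalIntegrable_inv (h : IsRadius ρ y ζ r) (i : ι) (a b : ℝ) :
    IntervalIntegrable (fun t => (r i t)⁻¹) volume a b :=
  ((h.continuous_radius i).inv₀ fun t => (h.pos i t).ne').intervalIntegrable a b

end Finite

variable [Fintype ι]

lemma IsRadius.sum_rpow_mul_indicator_entityBox_le (h : IsRadius ρ y ζ r)
    (hN : HasCoveringBound X 36 N)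
    (t : ℝ) (z : ι × ℝ) :
    ∑ i, r i t ^ (-(9 / 8) : ℝ) *
        (entityBox ζ r i t).indicator (fun z => r z.1 z.2 ^ (1 / 8 : ℝ)) z ≤
      2 * (N * y) * 13 ^ (9 / 8 : ℝ) *
        ((r z.1 z.2)⁻¹ * (1 + |(t - z.2) / r z.1 z.2|) ^ (-(9 / 8) : ℝ)) := by
  classical
  obtain ⟨j, τ⟩ := z
  have hR := h.pos j τ
  set v : ℝ := (t - τ) / r j τ with hv
  set m : ℝ := r j τ * (1 + |v|) / 13 with hm
  have hm_eq : m = (r j τ + |t - τ|) / 13 := by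
    rw [hm, hv, abs_div, abs_of_pos hR]
    field_simp
  have hm_rpow : m ^ (-(9 / 8) : ℝ) =
      13 ^ (9 / 8 : ℝ) * (r j τ ^ (-(9 / 8) : ℝ) * (1 + |v|) ^ (-(9 / 8) : ℝ)) := by
    rw [hm, Real.div_rpow (by positivity) (by norm_num), Real.mul_rpow hR.le (by positivity),
      Real.rpow_neg (by norm_num : (0 : ℝ) ≤ 13), div_inv_eq_mul, mul_comm]
  have hsum : ∑ i with (j, τ) ∈ entityBox ζ r i t, r i t ^ (-(9 / 8) : ℝ) ≤
      2 * (N * y) * m ^ (-(9 / 8) : ℝ) := by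
    refine h.sum_rpow_neg_le hN (p := ζ j τ) (by positivity) (by norm_num) (fun i hi => ?_)
      fun i hi => ?_
    · rw [hm_eq]
      linarith [h.add_abs_sub_le_of_mem_entityBox (Finset.mem_filter.1 hi).2]
    · rw [dist_comm]
      exact (Finset.mem_filter.1 hi).2.2
  calc ∑ i, r i t ^ (-(9 / 8) : ℝ) *
        (entityBox ζ r i t).indicator (fun z => r z.1 z.2 ^ (1 / 8 : ℝ)) (j, τ)
      = (∑ i with (j, τ) ∈ entityBox ζ r i t, r i t ^ (-(9 / 8) : ℝ)) * r j τ ^ (1 / 8 : ℝ) := by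
        simp only [indicator_apply, mul_ite, mul_zero, Finset.sum_mul, Finset.sum_filter, ite_mul,
          zero_mul]
    _ ≤ 2 * (N * y) * m ^ (-(9 / 8) : ℝ) * r j τ ^ (1 / 8 : ℝ) := by gcongr
    _ = 2 * (N * y) * 13 ^ (9 / 8 : ℝ) * ((r j τ)⁻¹ * (1 + |v|) ^ (-(9 / 8) : ℝ)) := by
        rw [hm_rpow, ← rpow_neg_nine_eighths_mul_rpow hR]
        ring

lemma IsRadius.sum_inv_sub_le (h : IsRadius ρ y ζ r)
    (hN : HasCoveringBound X 36 N)
    (hq : NeighborsQueried ζ r P q a e) (hat : a ≤ t) (hte : t < e) :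
    ∑ i, q / 2 * ((r i t)⁻¹ - 3 * (e - t)⁻¹) ≤
      ∑ z ∈ P, 2 * (N * y) * 13 ^ (9 / 8 : ℝ) *
        ((r z.1 z.2)⁻¹ * (1 + |(t - z.2) / r z.1 z.2|) ^ (-(9 / 8) : ℝ)) :=
  calc ∑ i, q / 2 * ((r i t)⁻¹ - 3 * (e - t)⁻¹)
      ≤ ∑ i, r i t ^ (-(9 / 8) : ℝ) * queryWeight r P (entityBox ζ r i t) :=
        Finset.sum_le_sum fun i _ => h.inv_sub_le_rpow_mul_queryWeight hq hat hte i
    _ = ∑ z ∈ P, ∑ i, r i t ^ (-(9 / 8) : ℝ) *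
          (entityBox ζ r i t).indicator (fun z => r z.1 z.2 ^ (1 / 8 : ℝ)) z := by
        simp only [queryWeight, Finset.mul_sum]
        exact Finset.sum_comm
    _ ≤ _ := Finset.sum_le_sum fun z _ => h.sum_rpow_mul_indicator_entityBox_le hN t z

theorem IsRadius.sum_integral_inv_sub_le_card_mul (h : IsRadius ρ y ζ r)
    (hN : HasCoveringBound X 36 N)
    (hab : a ≤ b) (hbe : b < e) (hq : NeighborsQueried ζ r P q a e) :
    q / 2 * (∑ i, (∫ t in a..b, (r i t)⁻¹) -
        3 * Fintype.card ι * Real.log ((e - a) / (e - b))) ≤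
      #P * (2 * (N * y) * 13 ^ (9 / 8 : ℝ) * ∫ v : ℝ, (1 + |v|) ^ (-(9 / 8) : ℝ)) := by
  set C : ℝ := 2 * (N * y) * 13 ^ (9 / 8 : ℝ)
  set φ : ℝ → ℝ := fun v => (1 + |v|) ^ (-(9 / 8) : ℝ)
  have hterm (i : ι) :
      IntervalIntegrable (fun t => q / 2 * ((r i t)⁻¹ - 3 * (e - t)⁻¹)) volume a b :=
    ((h.intervalIntegrable_inv i a b).sub
      ((intervalIntegrable_inv_sub hab hbe).const_mul 3)).const_mul _
  have hkernel (z : ι × ℝ) : IntervalIntegrable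
      (fun t => C * ((r z.1 z.2)⁻¹ * φ ((t - z.2) / r z.1 z.2))) volume a b :=
    ((integrable_dilation integrable_one_add_abs_rpow (h.pos _ _).ne' _).const_mul
      C).intervalIntegrable
  calc q / 2 * (∑ i, (∫ t in a..b, (r i t)⁻¹) -
        3 * Fintype.card ι * Real.log ((e - a) / (e - b)))
      = ∑ i, ∫ t in a..b, q / 2 * ((r i t)⁻¹ - 3 * (e - t)⁻¹) := by
        simp only [intervalIntegral.integral_const_mul,
          intervalIntegral.integral_sub
            (h.intervalIntegrable_inv _ a b) ((intervalIntegrable_inv_sub hab hbe).const_mul 3),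
          integral_inv_sub hab hbe, ← Finset.mul_sum, Finset.sum_sub_distrib,
          Finset.sum_const, Finset.card_univ, nsmul_eq_mul]
        ring
    _ ≤ ∑ z ∈ P, ∫ t in a..b, C * ((r z.1 z.2)⁻¹ * φ ((t - z.2) / r z.1 z.2)) :=
        sum_intervalIntegral_le_sum hab (fun i _ => hterm i) (fun z _ => hkernel z)
          fun t ht => h.sum_inv_sub_le hN hq ht.1 (ht.2.trans_lt hbe)
    _ ≤ #P • (C * ∫ v, φ v) := Finset.sum_le_card_nsmul _ _ _ fun z _ => by
        rw [intervalIntegral.integral_const_mul]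
        gcongr
        exact intervalIntegral_dilation_le integrable_one_add_abs_rpow (fun v => by positivity)
          (h.pos _ _) _ hab
    _ = #P * (C * ∫ v, φ v) := nsmul_eq_mul _ _

theorem IsRadius.mul_sum_integral_inv_le_card_mul (h : IsRadius ρ y ζ r)
    (hN : HasCoveringBound X 36 N)
    (hab : a ≤ b) (hbe : b < e) (hq : NeighborsQueried ζ r P q a e)
    (hlog : 6 * Fintype.card ι * Real.log ((e - a) / (e - b)) ≤ ∑ i, ∫ t in a..b, (r i t)⁻¹) :
    q * ∑ i, ∫ t in a..b, (r i t)⁻¹ ≤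
      #P * (8 * (N * y) * 13 ^ (9 / 8 : ℝ) * ∫ v : ℝ, (1 + |v|) ^ (-(9 / 8) : ℝ)) := by
  set H := ∑ i, ∫ t in a..b, (r i t)⁻¹
  have hhalf : q / 2 * (1 / 2 * H) ≤
      q / 2 * (H - 3 * Fintype.card ι * Real.log ((e - a) / (e - b))) := by
    gcongr
    linarith
  linarith [hhalf.trans (h.sum_integral_inv_sub_le_card_mul hN hab hbe hq)]

end DoubleCounting

section Schedule

variable {d n : ℕ} {ρ : ℝ}

lemma mem_uRegionM_of_not_queried {ζ : ℝ → EuclideanSpace ℝ (Fin d)} (hζ : LipschitzWith 1 ζ)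
    {Q : Set ℝ} {s t : ℝ} (hQ : ∀ τ ∈ Ioc s t, τ ∉ Q) {p : EuclideanSpace ℝ (Fin d)}
    (hp : dist p (ζ s) ≤ ρ + (t - s)) : p ∈ uRegionM ρ ζ Q t := by
  rw [uRegionM]
  split_ifs with hne
  · set l := sSup (Q ∩ Iic t)
    have hl : l ≤ s := csSup_le hne fun τ hτ => by
      by_contra! hsτ
      exact hQ τ ⟨hsτ, hτ.2⟩ hτ.1
    have hdist : dist (ζ s) (ζ l) ≤ s - l := by
      simpa [Real.dist_eq, abs_of_nonneg (sub_nonneg.2 hl)] using hζ.dist_le_mul s l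
    rw [mem_closedBall]
    linarith [dist_triangle p (ζ s) (ζ l)]
  · exact mem_univ p

lemma neighborsQueried_of_ply_le {ζ : Fin n → ℝ → EuclideanSpace ℝ (Fin d)} {r : Fin n → ℝ → ℝ}
    {x y : ℕ} (h : IsRadius ρ y ζ r) {Q : Fin n → Set ℝ} {P : Finset (Fin n × ℝ)} {a e : ℝ}
    (hP : ∀ j, ∀ τ ∈ Q j ∩ Icc a e, (j, τ) ∈ P)
    (hply : ∀ t ∈ Icc a e, ∀ p, {i | p ∈ uRegionM ρ (ζ i) (Q i) t}.ncard ≤ x) :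
    NeighborsQueried ζ r P (y + 1 - x) a e := by
  intro i t hat hte
  have hR := h.pos i t
  set near := {j | dist (ζ i t) (ζ j t) ≤ ρ + r i t}
  set queried := {j | dist (ζ j t) (ζ i t) ≤ 2 * r i t ∧ ∃ τ ∈ Ioc t (t + r i t), (j, τ) ∈ P}
  set uncertain := {j | ζ i t ∈ uRegionM ρ (ζ j) (Q j) (t + r i t)}
  have hsub : near ⊆ queried ∪ uncertain := by
    intro j (hj : dist (ζ i t) (ζ j t) ≤ ρ + r i t)
    by_cases hjQ : ∃ τ ∈ Ioc t (t + r i t), τ ∈ Q j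
    · obtain ⟨τ, hτ, hτQ⟩ := hjQ
      have hτP : (j, τ) ∈ P := hP j τ ⟨hτQ, hat.trans hτ.1.le, hτ.2.trans hte⟩
      refine Or.inl ⟨?_, τ, hτ, hτP⟩
      rw [dist_comm]
      linarith [h.lt_radius i t]
    · push Not at hjQ
      exact Or.inr (mem_uRegionM_of_not_queried (h.lipschitz j) hjQ (by linarith))
  have hnear : y < near.ncard := (h.lt_ncard_iff i t _).2 le_rfl
  have huncertain : uncertain.ncard ≤ x := hply _ ⟨by linarith, hte⟩ _
  have := (ncard_le_ncard hsub).trans (ncard_union_le queried uncertain)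
  omega

lemma xSep_le_iff {z : Fin n → EuclideanSpace ℝ (Fin d)} {y : ℕ} (hy : 1 ≤ y) (hyn : y ≤ n - 1)
    (i : Fin n) {c : ℝ} :
    xSep ρ z y i ≤ c ↔ y ≤ {j | j ≠ i ∧ dist (z i) (z j) - 2 * ρ ≤ c}.ncard :=
  csInf_le_iff_le_ncard hy (by
    rwa [show {j | j ≠ i} = {i}ᶜ from rfl, ncard_compl, Nat.card_eq_fintype_card, Fintype.card_fin,
      ncard_singleton])

lemma isRadius_xSep {ζ : Fin n → ℝ → EuclideanSpace ℝ (Fin d)} {y : ℕ} (hρ : 0 ≤ ρ)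
    (hζ : ∀ i, LipschitzWith 1 (ζ i)) (hy : 1 ≤ y) (hyn : y ≤ n - 1)
    (hpos : ∀ i t, 0 < xSep ρ (fun j => ζ j t) y i) :
    IsRadius ρ y ζ fun i t => ρ + xSep ρ (fun j => ζ j t) y i where
  nonneg := hρ
  lipschitz := hζ
  lt_radius i t := lt_add_of_pos_right ρ (hpos i t)
  lt_ncard_iff i t D := by
    set others := {j | j ≠ i ∧ dist (ζ i t) (ζ j t) ≤ D}
    have hsep : ρ + (ρ + xSep ρ (fun j => ζ j t) y i) ≤ D ↔ y ≤ others.ncard := by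
      have := xSep_le_iff (ρ := ρ) (z := fun j => ζ j t) hy hyn i (c := D - 2 * ρ)
      simp only [sub_le_sub_iff_right] at this
      rw [← this]
      constructor <;> intro <;> linarith
    rw [hsep]
    rcases lt_or_ge D 0 with hD | hD
    · have hfar (j : Fin n) : ¬ dist (ζ i t) (ζ j t) ≤ D := (hD.trans_le dist_nonneg).not_ge
      simpa [others, hfar] using Nat.one_le_iff_ne_zero.1 hy
    · have hinsert : {j | dist (ζ i t) (ζ j t) ≤ D} = insert i others := by
        ext j
        by_cases hji : j = i <;> simp [others, hji, hD]
      rw [hinsert, ncard_insert_of_notMem (by simp [others]), Nat.lt_succ_iff]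

end Schedule

lemma six_mul_log_le {a b : ℝ} (hab : a < b) :
    6 * Real.log ((b + (b - a) / 2 ^ 55 - a) / (b + (b - a) / 2 ^ 55 - b)) ≤ 505 := by
  have hratio : (b + (b - a) / 2 ^ 55 - a) / (b + (b - a) / 2 ^ 55 - b) = 2 ^ 55 + 1 := by
    rw [add_sub_cancel_left, div_eq_iff (div_pos (sub_pos.2 hab) (by positivity)).ne']
    ring
  calc 6 * Real.log ((b + (b - a) / 2 ^ 55 - a) / (b + (b - a) / 2 ^ 55 - b))
      ≤ 6 * Real.log (2 ^ 56) := by rw [hratio]; gcongr; norm_num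
    _ = 336 * Real.log 2 := by rw [Real.log_pow]; push_cast; ring
    _ ≤ 505 := by linarith [Real.log_two_lt_d9]

end MobileEntities

open MobileEntities

theorem stmt11_general (d : ℕ) :
    ∃ K : ℝ, 0 < K ∧
      ∀ (n : ℕ) (ρ : ℝ) (ζ : Fin n → ℝ → EuclideanSpace ℝ (Fin d)) (x y : ℕ)
        (a b e : ℝ) (Q : Fin n → Set ℝ),
        0 ≤ ρ →
        (∀ i : Fin n, LipschitzWith 1 (ζ i)) →
        1 ≤ y → y ≤ n - 1 →
        (∀ (i : Fin n) (t : ℝ), 0 < xSep ρ (fun j => ζ j t) y i) →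
        a ≤ b → b < e →
        6 * n * Real.log ((e - a) / (e - b)) ≤
          ∑ i : Fin n, ∫ t in a..b, 1 / (ρ + xSep ρ (fun j => ζ j t) y i) →
        (∀ t ∈ Icc a e, ∀ q : EuclideanSpace ℝ (Fin d),
          {i : Fin n | q ∈ uRegionM ρ (ζ i) (Q i) t}.ncard ≤ x) →
        ENNReal.ofReal
            ((((y : ℝ) - (x : ℝ) + 1) / (K * (y : ℝ))) *
              ∑ i : Fin n, ∫ t in a..b, 1 / (ρ + xSep ρ (fun j => ζ j t) y i))
          ≤ ∑ i : Fin n, ((Q i ∩ Icc a e).encard : ℝ≥0∞) := by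
  obtain ⟨N, hN⟩ := exists_hasCoveringBound (EuclideanSpace ℝ (Fin d)) 36
  set J : ℝ := ∫ v : ℝ, (1 + |v|) ^ (-(9 / 8) : ℝ)
  have hJ : 0 ≤ J := integral_nonneg fun v => by positivity
  refine ⟨8 * N * 13 ^ (9 / 8 : ℝ) * J + 1, by positivity, ?_⟩
  intro n ρ ζ x y a b e Q hρ hζ hy hyn hpos hab hbe hH hply
  by_cases htop : ∑ i : Fin n, ((Q i ∩ Icc a e).encard : ℝ≥0∞) = ⊤
  · exact htop ▸ le_top
  obtain ⟨P, hP, hP_card⟩ := exists_finset_card_eq_sum_encard htop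
  have h := isRadius_xSep hρ hζ hy hyn hpos
  simp only [one_div] at hH ⊢
  have hcount := h.mul_sum_integral_inv_le_card_mul hN hab hbe
    (neighborsQueried_of_ply_le h hP hply) (by rwa [Fintype.card_fin])
  set H := ∑ i : Fin n, ∫ t in a..b, (ρ + xSep ρ (fun j => ζ j t) y i)⁻¹
  have hH_nonneg : 0 ≤ H := Finset.sum_nonneg fun i _ =>
    intervalIntegral.integral_nonneg hab fun t _ => (inv_pos.2 (h.pos i t)).le
  have hq : (y : ℝ) - x + 1 ≤ (y + 1 - x : ℕ) := by
    have : (y : ℝ) + 1 ≤ (y + 1 - x : ℕ) + x := by exact_mod_cast le_tsub_add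
    linarith
  have hy_pos : (0 : ℝ) < y := by exact_mod_cast hy
  rw [← hP_card, ← ENNReal.ofReal_natCast]
  refine ENNReal.ofReal_le_ofReal ?_
  rw [div_mul_eq_mul_div, div_le_iff₀ (by positivity)]
  calc ((y : ℝ) - x + 1) * H ≤ (y + 1 - x : ℕ) * H := by gcongr
    _ ≤ #P * (8 * (N * y) * 13 ^ (9 / 8 : ℝ) * J) := hcount
    _ = #P * (8 * N * 13 ^ (9 / 8 : ℝ) * J * y) := by ring
    _ ≤ #P * ((8 * N * 13 ^ (9 / 8 : ℝ) * J + 1) * y) := by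
        gcongr
        exact le_add_of_nonneg_right zero_le_one

theorem stmt11 (d : ℕ) (hd : 1 ≤ d) :
    ∃ K : ℝ, 0 < K ∧
      ∀ (n : ℕ) (ρ : ℝ) (ζ : Fin n → ℝ → EuclideanSpace ℝ (Fin d)) (x y : ℕ)
        (a b : ℝ) (Q : Fin n → Set ℝ),
        0 ≤ ρ →
        (∀ i : Fin n, LipschitzWith 1 (ζ i)) →
        (∀ (t : ℝ) (i j : Fin n), i ≠ j → 2 * ρ ≤ dist (ζ i t) (ζ j t)) →
        1 ≤ x → x < y → y ≤ n - 1 →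
        (∀ (i : Fin n) (t : ℝ), 0 < xSep ρ (fun j => ζ j t) y i) →
        a < b →
        505 * (n : ℝ) ≤
          ∑ i : Fin n, ∫ t in a..b, 1 / (ρ + xSep ρ (fun j => ζ j t) y i) →
        (∀ t ∈ Set.Icc a (b + (b - a) / 2 ^ 55), ∀ q : EuclideanSpace ℝ (Fin d),
          {i : Fin n | q ∈ uRegionM ρ (ζ i) (Q i) t}.ncard ≤ x) →
        ENNReal.ofReal
            ((((y : ℝ) - (x : ℝ) + 1) / (K * (y : ℝ))) *
              ∑ i : Fin n, ∫ t in a..b, 1 / (ρ + xSep ρ (fun j => ζ j t) y i))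
          ≤ ∑ i : Fin n, ((Q i ∩ Set.Icc a (b + (b - a) / 2 ^ 55)).encard : ℝ≥0∞) := by
  obtain ⟨K, hK, hqueries⟩ := stmt11_general d
  refine ⟨K, hK, fun n ρ ζ x y a b Q hρ hζ _ _ hxy hyn hpos hab hH hply =>
    hqueries n ρ ζ x y a b _ Q hρ hζ (by omega) hyn hpos hab.le
      (lt_add_of_pos_right b (div_pos (sub_pos.2 hab) (by positivity))) (hH.trans' ?_) hply⟩
  rw [mul_right_comm]
  exact mul_le_mul_of_nonneg_right (six_mul_log_le hab) n.cast_nonneg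
end
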